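/- arXiv:1603.06245 — 11 statements merged into one kernel-verified Lean document; each statement's English description precedes it below -/
import Mathlib

section
/- Let c0, c1 ≥ 0 and a be real constants and v0 ≥ 0 with c0² + 4·a·c1 ≥ 0 and w := √(c0² + 4·a·c1) > 0. Define v(t) := v0 + (a0 − a)·E(t,w)/(1 − γ·E(t,w)). Then v(0) = v0, and at every t where 1 − γ·E(t,w) ≠ 0 the function v is differentiable and satisfies the Riccati equation v'(t) = a − c0·v(t) − c1·v(t)². -/
/-!
Translating the unknown, `v = v0 + y`, turns a Riccati equation into another one with the same
discriminant, now with initial value `0`. For the equation `y' = p - b y - c y²` whose discriminant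
`b² + 4 p c` is a square `w²`, put `γ = (w + b) / 2`, so that `w = 2 γ - b` and `γ (γ - b) = p c`.
The Möbius substitution `y = -p e / (1 - γ e)` then linearises it to `e' = w e - 1`, which is
solved by `e(t) = (1 - exp (w t)) / w`.
-/

section Riccati

variable {𝕜 𝕜' : Type*} [NontriviallyNormedField 𝕜] [NontriviallyNormedField 𝕜']
  [NormedAlgebra 𝕜 𝕜'] {t : 𝕜}

theorem hasDerivAt_div_one_sub_mul {f : 𝕜 → 𝕜'} {f' : 𝕜'} (γ : 𝕜') (hf : HasDerivAt f f' t)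
    (hne : 1 - γ * f t ≠ 0) :
    HasDerivAt (fun s => f s / (1 - γ * f s)) (f' / (1 - γ * f t) ^ 2) t := by
  refine (hf.fun_div ((hf.const_mul γ).const_sub 1) hne).congr_deriv ?_
  ring

theorem hasDerivAt_riccati_of_linear {e : 𝕜 → 𝕜'} {p b c γ : 𝕜'} (hγ : γ * (γ - b) = p * c)
    (he : HasDerivAt e ((2 * γ - b) * e t - 1) t) (hne : 1 - γ * e t ≠ 0) :
    let y := fun s => -p * (e s / (1 - γ * e s))
    HasDerivAt y (p - b * y t - c * y t ^ 2) t := by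
  intro y
  refine ((hasDerivAt_div_one_sub_mul γ he hne).const_mul (-p)).congr_deriv ?_
  have numerator : (1 - γ * e t) ^ 2 + b * e t * (1 - γ * e t) - p * c * e t ^ 2
      = 1 - (2 * γ - b) * e t := by
    linear_combination e t ^ 2 * hγ
  simp only [y]
  field_simp
  linear_combination -p * numerator

theorem hasDerivAt_riccati_const_add {y : 𝕜 → 𝕜'} {a c0 c1 v0 : 𝕜'}
    (hy : HasDerivAt y
      (a - c0 * v0 - c1 * v0 ^ 2 - (c0 + 2 * c1 * v0) * y t - c1 * y t ^ 2) t) :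
    HasDerivAt (fun s => v0 + y s) (a - c0 * (v0 + y t) - c1 * (v0 + y t) ^ 2) t := by
  refine (hy.const_add v0).congr_deriv ?_
  ring

end Riccati

section RCLike

variable {𝕜 : Type*} [RCLike 𝕜]

theorem hasDerivAt_one_sub_exp_mul_div {w : 𝕜} (hw : w ≠ 0) (t : 𝕜) :
    HasDerivAt (fun s => (1 - NormedSpace.exp (w * s)) / w)
      (w * ((1 - NormedSpace.exp (w * t)) / w) - 1) t := by
  have hexp : HasDerivAt (fun s => NormedSpace.exp (w * s)) (NormedSpace.exp (w * t) * w) t :=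
    hasDerivAt_exp.comp t (hasDerivAt_const_mul w)
  refine ((hexp.const_sub 1).div_const w).congr_deriv ?_
  field_simp
  ring

theorem stmt0_general (c0 c1 a v0 w : 𝕜) (hw : w ^ 2 = c0 ^ 2 + 4 * a * c1) (hw0 : w ≠ 0)
    (α γ a0 : 𝕜) (hα : α = (w + c0) / 2) (hγ : γ = c1 * v0 + α)
    (ha0 : a0 = (c1 * v0 + c0) * v0)
    (E : 𝕜 → 𝕜 → 𝕜) (hE : ∀ t u, E t u = (1 - NormedSpace.exp (u * t)) / u)
    (v : 𝕜 → 𝕜) (hv : ∀ t, v t = v0 + (a0 - a) * E t w / (1 - γ * E t w)) :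
    v 0 = v0 ∧
      ∀ t : 𝕜, 1 - γ * E t w ≠ 0 →
        HasDerivAt v (a - c0 * v t - c1 * v t ^ 2) t := by
  refine ⟨by simp [hv, hE], fun t hne => ?_⟩
  set p := a - c0 * v0 - c1 * v0 ^ 2 with hp
  set b := c0 + 2 * c1 * v0 with hb
  have two_γ : 2 * γ - b = w := by rw [hγ, hα, hb]; ring
  have disc : w ^ 2 = b ^ 2 + 4 * p * c1 := by rw [hw, hp, hb]; ring
  have γ_mul : γ * (γ - b) = p * c1 := by
    linear_combination (2 * γ - b + w) / 4 * two_γ + disc / 4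
  have hE' : HasDerivAt (fun s => E s w) ((2 * γ - b) * E t w - 1) t := by
    simpa only [two_γ, hE] using hasDerivAt_one_sub_exp_mul_div hw0 t
  have hv' : v = fun s => v0 + -p * (E s w / (1 - γ * E s w)) := by
    funext s
    rw [hv, ha0, hp]
    ring
  rw [hv']
  exact hasDerivAt_riccati_const_add (hasDerivAt_riccati_of_linear γ_mul hE' hne)

end RCLike

/-- The formula v(t) = v0 + (a0 − a)·E(t,w)/(1 − γ·E(t,w)) satisfies
v(0) = v0 and the Riccati ODE v' = a − c0·v − c1·v² wherever the denominator is nonzero. -/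
theorem stmt0 (c0 c1 a v0 : ℝ) (hc0 : 0 ≤ c0) (hc1 : 0 ≤ c1) (hv0 : 0 ≤ v0)
    (hdisc : 0 ≤ c0 ^ 2 + 4 * a * c1)
    (w : ℝ) (hw : w = Real.sqrt (c0 ^ 2 + 4 * a * c1)) (hwpos : 0 < w)
    (α γ a0 : ℝ) (hα : α = (w + c0) / 2) (hγ : γ = c1 * v0 + α)
    (ha0 : a0 = (c1 * v0 + c0) * v0)
    (E : ℝ → ℝ → ℝ) (hE : ∀ t u, E t u = (1 - Real.exp (u * t)) / u)
    (v : ℝ → ℝ) (hv : ∀ t, v t = v0 + (a0 - a) * E t w / (1 - γ * E t w)) :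
    v 0 = v0 ∧
      ∀ t : ℝ, 1 - γ * E t w ≠ 0 →
        HasDerivAt v (a - c0 * v t - c1 * v t ^ 2) t :=
  stmt0_general c0 c1 a v0 w (hw ▸ Real.sq_sqrt hdisc) hwpos.ne' α γ a0 hα hγ ha0 E
    (by simpa only [Real.exp_eq_exp_ℝ] using hE) v hv
end

section
/- Let c0 ≥ 0, c1 > 0, a < 0 and v0 ≥ 0 with c0² + 4·a·c1 < 0 and v0·c0 + 2·|a| > 0 and 2·c1·v0 + c0 > 0. Define v(t) := √(|a|/c1) · sin(θ0 − t·|w|/2)/sin(θ1 + t·|w|/2). Then v(0) = v0, and at every t where sin(θ1 + t·|w|/2) ≠ 0 the function v is differentiable and satisfies the Riccati equation v'(t) = a − c0·v(t) − c1·v(t)². -/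
/-!
Let `-u` and `-conj u` be the complex roots of the right-hand side, so that the equation reads
`v' = -c1 * |v + u| ^ 2`. Then `(arg (v + u))' = im (v' / (v + u)) = c1 * im u`: along a solution
the argument of `v + u` turns at the constant speed `c1 * im u = |w| / 2`. The law of sines in the
triangle `0`, `u`, `v + u` recovers `v` from that argument, which is the stated quotient of sines;
the two initial phases are `arg (v0 + u)` and `arg u - arg (v0 + u)`, the latter modulo `2π`.
-/

open Complex ComplexConjugate

/-- The real number `x` for which `x + u` lies on the line through `0` in direction `exp (β * I)`,
given by the law of sines. If that line is the real axis (`Real.sin β = 0`), the value is the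
meaningless `0`. -/
noncomputable def shiftToArg (u : ℂ) (β : ℝ) : ℝ :=
  ‖u‖ * Real.sin (arg u - β) / Real.sin β

/-- The complex number `u` in the upper half-plane with `-u` a root of `a - c0 * x - c1 * x ^ 2`,
for `0 < c1` and negative discriminant. -/
noncomputable def riccatiShift (c0 c1 a : ℝ) : ℂ :=
  ⟨c0 / (2 * c1), √(-(c0 ^ 2 + 4 * a * c1)) / (2 * c1)⟩

section shiftToArg

variable {u : ℂ} {β : ℝ}

theorem shiftToArg_add_re (hβ : Real.sin β ≠ 0) :
    shiftToArg u β + u.re = u.im * Real.cos β / Real.sin β := by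
  rw [shiftToArg, Real.sin_sub, ← norm_mul_cos_arg u, ← norm_mul_sin_arg u]
  field_simp
  ring

theorem normSq_shiftToArg_add (hβ : Real.sin β ≠ 0) :
    normSq (shiftToArg u β + u) = (u.im / Real.sin β) ^ 2 := by
  rw [normSq_apply, add_re, add_im, ofReal_re, ofReal_im, zero_add, shiftToArg_add_re hβ]
  field_simp
  rw [Real.cos_sq_add_sin_sq, mul_one]

theorem shiftToArg_arg_ofReal_add (hu : u.im ≠ 0) (x : ℝ) : shiftToArg u (arg (x + u)) = x := by
  have him : (x + u).im = u.im := by simp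
  have hz : (x + u : ℂ) ≠ 0 := fun h => hu (by rw [← him, h, zero_im])
  have hnorm : ‖(x + u : ℂ)‖ ≠ 0 := norm_ne_zero_iff.2 hz
  have hsin : Real.sin (arg (x + u)) ≠ 0 := by
    rw [sin_arg, him]
    exact div_ne_zero hu hnorm
  have hre : shiftToArg u (arg (x + u)) + u.re = x + u.re := by
    rw [shiftToArg_add_re hsin, cos_arg hz, sin_arg, him, add_re, ofReal_re]
    field_simp
  exact add_right_cancel hre

theorem hasDerivAt_shiftToArg (hβ : Real.sin β ≠ 0) :
    HasDerivAt (shiftToArg u) (-u.im / Real.sin β ^ 2) β := by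
  have hnum : HasDerivAt (fun x => ‖u‖ * Real.sin (arg u - x))
      (‖u‖ * (Real.cos (arg u - β) * -1)) β :=
    ((hasDerivAt_id β).const_sub (arg u)).sin.const_mul ‖u‖
  refine (hnum.div (Real.hasDerivAt_sin β) hβ).congr_deriv ?_
  have him : u.im = ‖u‖ * Real.sin (arg u - β + β) := by
    rw [sub_add_cancel, norm_mul_sin_arg]
  rw [him, Real.sin_add]
  ring

theorem hasDerivAt_shiftToArg_rotation (c θ t : ℝ) (ht : Real.sin (θ + t * (c * u.im)) ≠ 0) :
    HasDerivAt (fun s => shiftToArg u (θ + s * (c * u.im)))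
      (-c * normSq (shiftToArg u (θ + t * (c * u.im)) + u)) t := by
  have hphase : HasDerivAt (fun s => θ + s * (c * u.im)) (c * u.im) t :=
    (hasDerivAt_mul_const (c * u.im)).const_add θ
  refine ((hasDerivAt_shiftToArg ht).comp t hphase).congr_deriv ?_
  rw [normSq_shiftToArg_add ht]
  ring

end shiftToArg

theorem sin_arg_mul_conj_sub {z w : ℂ} (hz : z ≠ 0) (hw : w ≠ 0) (x : ℝ) :
    Real.sin (arg (z * conj w) - x) = Real.sin (arg z - (arg w + x)) := by
  have hangle : ((arg (z * conj w) - x : ℝ) : Real.Angle) = (arg z - (arg w + x) : ℝ) := by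
    rw [Real.Angle.coe_sub, arg_mul_coe_angle hz ((map_ne_zero conj).2 hw), arg_conj_coe_angle,
      Real.Angle.coe_sub, Real.Angle.coe_add]
    abel
  rw [← Real.Angle.sin_coe, hangle, Real.Angle.sin_coe]

theorem arctan_div_eq_arg {x : ℝ} (hx : 0 < x) (y : ℝ) : Real.arctan (y / x) = arg ⟨x, y⟩ := by
  have hlt : |arg ⟨x, y⟩| < Real.pi / 2 := abs_arg_lt_pi_div_two_iff.2 (Or.inl hx)
  rw [← Real.arctan_tan (abs_lt.1 hlt).1 (abs_lt.1 hlt).2, tan_arg]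

section riccatiShift

variable {c0 c1 a : ℝ}

theorem riccatiShift_im_pos (hc1 : 0 < c1) (hdisc : c0 ^ 2 + 4 * a * c1 < 0) :
    0 < (riccatiShift c0 c1 a).im :=
  div_pos (Real.sqrt_pos.2 (neg_pos.2 hdisc)) (by positivity)

theorem normSq_riccatiShift (hc1 : c1 ≠ 0) (hdisc : c0 ^ 2 + 4 * a * c1 ≤ 0) :
    normSq (riccatiShift c0 c1 a) = -a / c1 := by
  rw [riccatiShift, normSq_mk, div_mul_div_comm, div_mul_div_comm,
    Real.mul_self_sqrt (neg_nonneg.2 hdisc)]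
  field_simp
  ring

theorem riccati_eq_neg_mul_normSq (hc1 : c1 ≠ 0) (hdisc : c0 ^ 2 + 4 * a * c1 ≤ 0) (x : ℝ) :
    a - c0 * x - c1 * x ^ 2 = -c1 * normSq (x + riccatiShift c0 c1 a) := by
  have hre : (riccatiShift c0 c1 a).re = c0 / (2 * c1) := rfl
  rw [normSq_add, normSq_riccatiShift hc1 hdisc, normSq_ofReal, re_ofReal_mul, conj_re, hre]
  field_simp
  ring

theorem arg_ofReal_add_riccatiShift (hc1 : 0 < c1) (x : ℝ) :
    arg (x + riccatiShift c0 c1 a) = arg ⟨2 * c1 * x + c0, √(-(c0 ^ 2 + 4 * a * c1))⟩ := by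
  rw [← arg_real_mul _ (by positivity : 0 < 2 * c1)]
  congr 1
  apply Complex.ext
  · simp only [riccatiShift, re_ofReal_mul, add_re, ofReal_re]
    field_simp
  · simp only [riccatiShift, im_ofReal_mul, add_im, ofReal_im]
    field_simp
    ring

theorem arg_riccatiShift_mul_conj (hc1 : 0 < c1) (hdisc : c0 ^ 2 + 4 * a * c1 ≤ 0) (x : ℝ) :
    arg (riccatiShift c0 c1 a * conj (x + riccatiShift c0 c1 a)) =
      arg ⟨x * c0 - 2 * a, x * √(-(c0 ^ 2 + 4 * a * c1))⟩ := by
  have hexpand : riccatiShift c0 c1 a * conj (x + riccatiShift c0 c1 a) =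
      x * riccatiShift c0 c1 a + (-a / c1 : ℝ) := by
    rw [map_add, conj_ofReal, mul_add, mul_conj, normSq_riccatiShift hc1.ne' hdisc, mul_comm]
  rw [hexpand, ← arg_real_mul _ (by positivity : 0 < 2 * c1)]
  congr 1
  apply Complex.ext
  · simp only [riccatiShift, re_ofReal_mul, add_re, ofReal_re]
    field_simp
    ring
  · simp only [riccatiShift, im_ofReal_mul, add_im, ofReal_im]
    field_simp
    ring

end riccatiShift

theorem stmt1_general (c0 c1 a v0 : ℝ) (hc1 : 0 < c1) (hdisc : c0 ^ 2 + 4 * a * c1 < 0)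
    (wabs θ0 θ1 : ℝ)
    (hwabs : wabs = √(-(c0 ^ 2 + 4 * a * c1)))
    (hθ0 : θ0 = arg ⟨v0 * c0 + 2 * |a|, v0 * wabs⟩)
    (hθ1 : θ1 = arg ⟨2 * c1 * v0 + c0, wabs⟩)
    (v : ℝ → ℝ)
    (hv : ∀ t, v t = √(|a| / c1) * Real.sin (θ0 - t * wabs / 2) / Real.sin (θ1 + t * wabs / 2)) :
    v 0 = v0 ∧
      ∀ t : ℝ, Real.sin (θ1 + t * wabs / 2) ≠ 0 →
        HasDerivAt v (a - c0 * v t - c1 * v t ^ 2) t := by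
  set u := riccatiShift c0 c1 a with hu
  have him : 0 < u.im := riccatiShift_im_pos hc1 hdisc
  have hu0 : u ≠ 0 := fun h => him.ne' (by rw [h, zero_im])
  have hz0 : (v0 + u : ℂ) ≠ 0 := fun h => him.ne' (by simpa using congrArg im h)
  have ha : |a| = -a := abs_of_neg (by nlinarith [sq_nonneg c0])
  have hnorm : √(|a| / c1) = ‖u‖ := by
    rw [ha, ← normSq_riccatiShift hc1.ne' hdisc.le, norm_def]
  have hspeed (t : ℝ) : t * wabs / 2 = t * (c1 * u.im) := by
    rw [hwabs, hu, riccatiShift]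
    field_simp
  have hθ1' : θ1 = arg (v0 + u) := by
    rw [hθ1, hwabs, arg_ofReal_add_riccatiShift hc1]
  have hθ0' : θ0 = arg (u * conj (v0 + u)) := by
    rw [hθ0, hwabs, ha, mul_neg, ← sub_eq_add_neg, arg_riccatiShift_mul_conj hc1 hdisc.le]
  have hv' : v = fun t => shiftToArg u (θ1 + t * (c1 * u.im)) := by
    ext t
    rw [hv, hnorm, hspeed, hθ0', sin_arg_mul_conj_sub hu0 hz0, ← hθ1', shiftToArg]
  subst hv'
  refine ⟨?_, fun t ht => ?_⟩
  · simpa only [zero_mul, add_zero, hθ1'] using shiftToArg_arg_ofReal_add him.ne' v0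
  · rw [riccati_eq_neg_mul_normSq hc1.ne' hdisc.le]
    exact hasDerivAt_shiftToArg_rotation c1 θ1 t (hspeed t ▸ ht)

/-- In the complex-w case, v(t) = √(|a|/c1)·sin(θ0 − t|w|/2)/sin(θ1 + t|w|/2)
satisfies v(0) = v0 and the Riccati ODE wherever the denominator is nonzero. -/
theorem stmt1 (c0 c1 a v0 : ℝ) (hc0 : 0 ≤ c0) (hc1 : 0 < c1) (ha : a < 0) (hv0 : 0 ≤ v0)
    (hdisc : c0 ^ 2 + 4 * a * c1 < 0)
    (h1 : 0 < v0 * c0 + 2 * |a|) (h2 : 0 < 2 * c1 * v0 + c0)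
    (wabs θ0 θ1 : ℝ)
    (hwabs : wabs = Real.sqrt (-(c0 ^ 2 + 4 * a * c1)))
    (hθ0 : θ0 = Real.arctan (v0 * wabs / (v0 * c0 + 2 * |a|)))
    (hθ1 : θ1 = Real.arctan (wabs / (2 * c1 * v0 + c0)))
    (v : ℝ → ℝ)
    (hv : ∀ t, v t = Real.sqrt (|a| / c1) * Real.sin (θ0 - t * wabs / 2) /
        Real.sin (θ1 + t * wabs / 2)) :
    v 0 = v0 ∧
      ∀ t : ℝ, Real.sin (θ1 + t * wabs / 2) ≠ 0 →
        HasDerivAt v (a - c0 * v t - c1 * v t ^ 2) t := by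
  exact stmt1_general c0 c1 a v0 hc1 hdisc wabs θ0 θ1 hwabs (hθ0.trans (arctan_div_eq_arg h1 _))
    (hθ1.trans (arctan_div_eq_arg h2 _)) v hv
end

section
/- Let c0 ≥ 0, c1 > 0, a ∈ ℝ, v0 ≥ 0 with w := √(c0² + 4·a·c1) > 0, and set v∞ := β/c1. Define s(t) := v∞·t + (1/c1)·log(1 − c1·(v∞ − v0)·E(−t,w)). Then s(0) = 0, and at every t where 1 − c1·(v∞ − v0)·E(−t,w) > 0 and 1 − γ·E(t,w) ≠ 0, s is differentiable with s'(t) = v(t), where v(t) := v0 + (a0 − a)·E(t,w)/(1 − γ·E(t,w)). -/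
/-!
Put `k := c1 * (vinf - v0)`, so that `γ = w - k`. Since `E(-t, w) = -exp (-w t) E(t, w)`, the
argument of the logarithm is `1 - k E(-t, w) = exp (-w t) (1 - γ E(t, w))`, and its logarithmic
derivative is `-k / (1 - γ E(t, w))`. Hence `s' = vinf - (vinf - v0) / (1 - γ E)`. On the other hand
`a0 - a` is the value at `v0` of the Riccati polynomial `c1 v ^ 2 + c0 v - a`, whose roots are
`vinf` and `-α / c1`; it factors as `(v0 - vinf) γ`, which brings `v` into the same form.
-/

open Real

section Field

variable {K : Type*} [Field K]

theorem quadratic_eq_mul_of_discrim_eq_sq [NeZero (2 : K)] {a b c s : K} (ha : a ≠ 0)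
    (h : discrim a b c = s ^ 2) (x : K) :
    a * (x * x) + b * x + c = a * (x - (-b + s) / (2 * a)) * (x - (-b - s) / (2 * a)) := by
  have h2 : (2 : K) ≠ 0 := two_ne_zero
  rw [discrim] at h
  field_simp
  linear_combination -h

theorem add_sub_mul_div_one_sub {x : K} (hx : 1 - x ≠ 0) (u v : K) :
    v + (v - u) * x / (1 - x) = u - (u - v) / (1 - x) := by
  field_simp
  ring

end Field

/-- The function `E(t, w) = (1 - exp (w t)) / w` in terms of which the speed and the travelled space
are expressed. It is meant for `w ≠ 0`; at `w = 0` division gives `0` and not the limit `-t`. -/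
noncomputable def oneSubExpDiv (t w : ℝ) : ℝ :=
  (1 - exp (w * t)) / w

@[simp]
theorem oneSubExpDiv_zero_left (w : ℝ) : oneSubExpDiv 0 w = 0 := by
  simp [oneSubExpDiv]

theorem mul_oneSubExpDiv {w : ℝ} (hw : w ≠ 0) (t : ℝ) : w * oneSubExpDiv t w = 1 - exp (w * t) :=
  mul_div_cancel₀ _ hw

theorem oneSubExpDiv_neg_left (t w : ℝ) :
    oneSubExpDiv (-t) w = -(exp (-(w * t)) * oneSubExpDiv t w) := by
  have hexp : exp (-(w * t)) * exp (w * t) = 1 := by rw [← exp_add, neg_add_cancel, exp_zero]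
  rw [oneSubExpDiv, oneSubExpDiv, mul_neg]
  linear_combination -hexp / w

theorem one_sub_mul_oneSubExpDiv_neg {w : ℝ} (hw : w ≠ 0) (k t : ℝ) :
    1 - k * oneSubExpDiv (-t) w = exp (-(w * t)) * (1 - (w - k) * oneSubExpDiv t w) := by
  have hmul : w * oneSubExpDiv (-t) w = 1 - exp (-(w * t)) := by
    rw [mul_oneSubExpDiv hw, mul_neg]
  linear_combination (w - k) * oneSubExpDiv_neg_left t w - hmul

theorem hasDerivAt_oneSubExpDiv {w : ℝ} (hw : w ≠ 0) (t : ℝ) :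
    HasDerivAt (fun t ↦ oneSubExpDiv t w) (-exp (w * t)) t := by
  have hexp : HasDerivAt (fun t ↦ exp (w * t)) (exp (w * t) * w) t := by
    simpa using ((hasDerivAt_id t).const_mul w).exp
  refine ((hexp.const_sub 1).div_const w).congr_deriv ?_
  rw [neg_div, mul_div_cancel_right₀ _ hw]

theorem hasDerivAt_log_one_sub_mul_oneSubExpDiv_neg {w k t : ℝ} (hw : w ≠ 0)
    (hL : 1 - k * oneSubExpDiv (-t) w ≠ 0) :
    HasDerivAt (fun t ↦ log (1 - k * oneSubExpDiv (-t) w))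
      (-k / (1 - (w - k) * oneSubExpDiv t w)) t := by
  have hE : HasDerivAt (fun t ↦ oneSubExpDiv (-t) w) (exp (-(w * t))) t := by
    refine ((hasDerivAt_oneSubExpDiv hw (-t)).comp t (hasDerivAt_neg t)).congr_deriv ?_
    rw [mul_neg_one, neg_neg, mul_neg]
  refine (((hE.const_mul k).const_sub 1).log hL).congr_deriv ?_
  rw [one_sub_mul_oneSubExpDiv_neg hw, mul_comm k, ← mul_neg,
    mul_div_mul_left _ _ (exp_ne_zero _)]

/-- The travelled space `s(t)` of a motion with drag coefficient `c`, initial speed `v0`, limit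
speed `vinf` and rate `w`. In the theorem `vinf` and `w` are determined by `c0`, `c1` and `a`; here
the four parameters are independent, as its derivative is computed without a relation between
them. -/
noncomputable def travelledSpace (c v0 vinf w t : ℝ) : ℝ :=
  vinf * t + 1 / c * log (1 - c * (vinf - v0) * oneSubExpDiv (-t) w)

@[simp]
theorem travelledSpace_zero (c v0 vinf w : ℝ) : travelledSpace c v0 vinf w 0 = 0 := by
  simp [travelledSpace]

theorem hasDerivAt_travelledSpace {c v0 vinf w t : ℝ} (hc : c ≠ 0) (hw : w ≠ 0)
    (hL : 1 - c * (vinf - v0) * oneSubExpDiv (-t) w ≠ 0) :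
    HasDerivAt (travelledSpace c v0 vinf w)
      (vinf - (vinf - v0) / (1 - (w - c * (vinf - v0)) * oneSubExpDiv t w)) t := by
  have hlog := hasDerivAt_log_one_sub_mul_oneSubExpDiv_neg hw hL
  refine (((hasDerivAt_id t).const_mul vinf).add (hlog.const_mul (1 / c))).congr_deriv ?_
  field_simp
  ring

theorem stmt5_general (c0 c1 a v0 : ℝ) (hc1 : c1 ≠ 0)
    (w α β γ a0 vinf : ℝ) (hw : w ^ 2 = c0 ^ 2 + 4 * a * c1) (hw0 : w ≠ 0)
    (hα : α = (w + c0) / 2) (hβ : β = (w - c0) / 2) (hγ : γ = c1 * v0 + α)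
    (ha0 : a0 = (c1 * v0 + c0) * v0) (hvinf : vinf = β / c1)
    (E : ℝ → ℝ → ℝ) (hE : ∀ t u, E t u = (1 - exp (u * t)) / u)
    (s v : ℝ → ℝ)
    (hs : ∀ t, s t = vinf * t + (1 / c1) * log (1 - c1 * (vinf - v0) * E (-t) w))
    (hv : ∀ t, v t = v0 + (a0 - a) * E t w / (1 - γ * E t w)) :
    s 0 = 0 ∧
      ∀ t : ℝ, 0 < 1 - c1 * (vinf - v0) * E (-t) w → HasDerivAt s (v t) t := by
  obtain rfl : E = oneSubExpDiv := funext₂ hE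
  obtain rfl : s = travelledSpace c1 v0 vinf w := funext hs
  have hdiscrim : discrim c1 c0 (-a) = w ^ 2 := by
    rw [discrim, hw]
    ring
  have hfactor : a0 - a = (v0 - vinf) * γ := calc
    a0 - a = c1 * (v0 * v0) + c0 * v0 + -a := by
      rw [ha0]
      ring
    _ = c1 * (v0 - (-c0 + w) / (2 * c1)) * (v0 - (-c0 - w) / (2 * c1)) :=
      quadratic_eq_mul_of_discrim_eq_sq hc1 hdiscrim v0
    _ = (v0 - vinf) * γ := by
      rw [hvinf, hβ, hγ, hα]
      field_simp
      ring
  have hγ_eq : γ = w - c1 * (vinf - v0) := by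
    rw [hγ, hα, hvinf, mul_sub, mul_div_cancel₀ _ hc1, hβ]
    ring
  refine ⟨travelledSpace_zero .., fun t hL ↦ ?_⟩
  have hden : 1 - γ * oneSubExpDiv t w ≠ 0 := by
    rw [one_sub_mul_oneSubExpDiv_neg hw0, ← hγ_eq] at hL
    exact (pos_of_mul_pos_right hL (exp_pos _).le).ne'
  rw [hv, hfactor, mul_assoc, add_sub_mul_div_one_sub hden, hγ_eq]
  exact hasDerivAt_travelledSpace hc1 hw0 hL.ne'

/-- the travelled space s(t) = v∞·t + (1/c1)·log(1 − c1(v∞ − v0)E(−t,w))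
satisfies s(0) = 0 and s'(t) = v(t) wherever the log argument is positive and the
denominator of v is nonzero. -/
theorem stmt5 (c0 c1 a v0 : ℝ) (hc0 : 0 ≤ c0) (hc1 : 0 < c1) (hv0 : 0 ≤ v0)
    (w α β γ a0 vinf : ℝ) (hw : w = Real.sqrt (c0 ^ 2 + 4 * a * c1)) (hwpos : 0 < w)
    (hα : α = (w + c0) / 2) (hβ : β = (w - c0) / 2) (hγ : γ = c1 * v0 + α)
    (ha0 : a0 = (c1 * v0 + c0) * v0) (hvinf : vinf = β / c1)
    (E : ℝ → ℝ → ℝ) (hE : ∀ t u, E t u = (1 - Real.exp (u * t)) / u)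
    (s v : ℝ → ℝ)
    (hs : ∀ t, s t = vinf * t + (1 / c1) * Real.log (1 - c1 * (vinf - v0) * E (-t) w))
    (hv : ∀ t, v t = v0 + (a0 - a) * E t w / (1 - γ * E t w)) :
    s 0 = 0 ∧
      ∀ t : ℝ, 0 < 1 - c1 * (vinf - v0) * E (-t) w → 1 - γ * E t w ≠ 0 →
        HasDerivAt s (v t) t := by
  have hsq : w ^ 2 = c0 ^ 2 + 4 * a * c1 := hw ▸ sq_sqrt (sqrt_pos.1 (hw ▸ hwpos)).le
  exact (stmt5_general c0 c1 a v0 hc1.ne' w α β γ a0 vinf hsq hwpos.ne' hα hβ hγ ha0 hvinf E hE s v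
    hs hv).imp_right fun h t hL _ ↦ h t hL
end

section
/- Let c0 ≥ 0, c1 > 0, a < 0, v0 ≥ 0 with c0² + 4·a·c1 < 0, v0·c0 + 2·|a| > 0 and 2·c1·v0 + c0 > 0. Define s(t) := (1/c1)·( log( sin(θ1 + t·|w|/2)/sin θ1 ) − (c0/2)·t ). Then s(0) = 0, and at every t where sin(θ1 + t·|w|/2) > 0, s is differentiable with s'(t) = v(t), where v(t) := √(|a|/c1) · sin(θ0 − t·|w|/2)/sin(θ1 + t·|w|/2). -/
/-! The derivative of `s` is `(|w| cos x - c0 sin x) / (2 c1 sin x)` with `x = θ1 + t|w|/2`. For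
`z = c0 + i|w|`, the numerator is `‖z‖ sin (arg z - x)`, where `‖z‖ ^ 2 = 4 c1 |a|`. Since
`z * conj (2 c1 v0 + c0 + i|w|) = 2 c1 ((v0 c0 + 2|a|) + i v0 |w|)`, taking arguments gives
`arg z - θ1 = θ0`, so the numerator is `‖z‖ sin (θ0 - t|w|/2)`. -/

open scoped ComplexConjugate

theorem arctan_im_div_re_eq_arg {z : ℂ} (hz : 0 < z.re) :
    Real.arctan (z.im / z.re) = z.arg := by
  obtain ⟨hlt, hgt⟩ := abs_lt.mp (Complex.abs_arg_lt_pi_div_two_iff.mpr (Or.inl hz))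
  rw [← Complex.tan_arg, Real.arctan_tan hlt hgt]

theorem norm_mul_sin_arg_sub (z : ℂ) (x : ℝ) :
    ‖z‖ * Real.sin (z.arg - x) = z.im * Real.cos x - z.re * Real.sin x := by
  rw [Real.sin_sub, mul_sub, ← mul_assoc, ← mul_assoc, Complex.norm_mul_sin_arg,
    Complex.norm_mul_cos_arg]

theorem norm_mul_sin_arg_mul_conj_sub (z : ℂ) {u : ℂ} (hu : u ≠ 0) (y : ℝ) :
    ‖z‖ * Real.sin ((z * conj u).arg - y) =
      z.im * Real.cos (u.arg + y) - z.re * Real.sin (u.arg + y) := by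
  rcases eq_or_ne z 0 with rfl | hz
  · simp
  have hangle : (((z * conj u).arg - y : ℝ) : Real.Angle) = (z.arg - (u.arg + y) : ℝ) := by
    rw [Real.Angle.coe_sub, Real.Angle.coe_sub, Real.Angle.coe_add,
      Complex.arg_mul_coe_angle hz ((map_ne_zero conj).mpr hu), Complex.arg_conj_coe_angle]
    abel
  rw [← Real.Angle.sin_coe, hangle, Real.Angle.sin_coe, norm_mul_sin_arg_sub]

theorem hasDerivAt_log_sin_div_sub_const_mul {f : ℝ → ℝ} {f' b k x : ℝ}
    (hf : HasDerivAt f f' x) (hsin : Real.sin (f x) ≠ 0) (hk : k ≠ 0) :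
    HasDerivAt (fun y ↦ Real.log (Real.sin (f y) / k) - b * y)
      ((f' * Real.cos (f x) - b * Real.sin (f x)) / Real.sin (f x)) x := by
  refine (((hf.sin.div_const k).log (div_ne_zero hsin hk)).sub
    (hasDerivAt_const_mul b)).congr_deriv ?_
  field_simp

section QuadraticDrag

variable {c0 c1 a v0 w : ℝ}

theorem norm_mk_eq_two_mul_mul_sqrt_neg_div (hc1 : 0 < c1) (hw : w ^ 2 = -(c0 ^ 2 + 4 * a * c1)) :
    ‖(⟨c0, w⟩ : ℂ)‖ = 2 * c1 * √(-a / c1) := by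
  have hsq : c0 ^ 2 + w ^ 2 = (2 * c1) ^ 2 * (-a / c1) := by
    rw [hw]
    field_simp
    ring
  rw [Complex.norm_eq_sqrt_sq_add_sq, hsq, Real.sqrt_mul (by positivity),
    Real.sqrt_sq (by positivity)]

theorem mk_mul_conj_mk_eq_real_mul_mk (hw : w ^ 2 = -(c0 ^ 2 + 4 * a * c1)) :
    (⟨c0, w⟩ : ℂ) * conj ⟨2 * c1 * v0 + c0, w⟩ =
      (2 * c1 : ℝ) * ⟨v0 * c0 + 2 * -a, v0 * w⟩ := by
  apply Complex.ext
  · simp only [Complex.mul_re, Complex.conj_re, Complex.conj_im, Complex.ofReal_re,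
      Complex.ofReal_im]
    linear_combination hw
  · simp only [Complex.mul_im, Complex.conj_re, Complex.conj_im, Complex.ofReal_re,
      Complex.ofReal_im]
    ring

theorem mul_cos_sub_mul_sin_eq_mul_sin_arctan_sub (hc1 : 0 < c1)
    (hw : w ^ 2 = -(c0 ^ 2 + 4 * a * c1)) (h1 : 0 < v0 * c0 + 2 * -a)
    (h2 : 0 < 2 * c1 * v0 + c0) (y : ℝ) :
    w * Real.cos (Real.arctan (w / (2 * c1 * v0 + c0)) + y) -
        c0 * Real.sin (Real.arctan (w / (2 * c1 * v0 + c0)) + y) =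
      2 * c1 * √(-a / c1) * Real.sin (Real.arctan (v0 * w / (v0 * c0 + 2 * -a)) - y) := by
  let z : ℂ := ⟨c0, w⟩
  let u : ℂ := ⟨2 * c1 * v0 + c0, w⟩
  let q : ℂ := ⟨v0 * c0 + 2 * -a, v0 * w⟩
  have hu : u ≠ 0 := fun h ↦ h2.ne' (congrArg Complex.re h)
  have harg_u : Real.arctan (w / (2 * c1 * v0 + c0)) = u.arg :=
    arctan_im_div_re_eq_arg (z := u) h2
  have harg_q : Real.arctan (v0 * w / (v0 * c0 + 2 * -a)) = (z * conj u).arg := by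
    rw [mk_mul_conj_mk_eq_real_mul_mk hw, Complex.arg_real_mul q (by positivity)]
    exact arctan_im_div_re_eq_arg (z := q) h1
  rw [harg_u, harg_q, ← norm_mk_eq_two_mul_mul_sqrt_neg_div hc1 hw]
  exact (norm_mul_sin_arg_mul_conj_sub z hu y).symm

end QuadraticDrag

theorem stmt6_general (c0 c1 a v0 : ℝ) (hc1 : 0 < c1) (hdisc : c0 ^ 2 + 4 * a * c1 < 0)
    (h1 : 0 < v0 * c0 + 2 * |a|) (h2 : 0 < 2 * c1 * v0 + c0)
    (wabs θ0 θ1 : ℝ)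
    (hwabs : wabs = Real.sqrt (-(c0 ^ 2 + 4 * a * c1)))
    (hθ0 : θ0 = Real.arctan (v0 * wabs / (v0 * c0 + 2 * |a|)))
    (hθ1 : θ1 = Real.arctan (wabs / (2 * c1 * v0 + c0)))
    (s v : ℝ → ℝ)
    (hs : ∀ t, s t = (1 / c1) *
        (Real.log (Real.sin (θ1 + t * wabs / 2) / Real.sin θ1) - (c0 / 2) * t))
    (hv : ∀ t, v t = Real.sqrt (|a| / c1) * Real.sin (θ0 - t * wabs / 2) /
        Real.sin (θ1 + t * wabs / 2)) :
    s 0 = 0 ∧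
      ∀ t : ℝ, 0 < Real.sin (θ1 + t * wabs / 2) → HasDerivAt s (v t) t := by
  have ha : a < 0 := by nlinarith [sq_nonneg c0]
  have hw_pos : 0 < wabs := hwabs ▸ Real.sqrt_pos.mpr (by linarith)
  have hw_sq : wabs ^ 2 = -(c0 ^ 2 + 4 * a * c1) := hwabs ▸ Real.sq_sqrt (by linarith)
  have hsin_θ1 : Real.sin θ1 ≠ 0 :=
    hθ1 ▸ (Real.sin_arctan_pos.mpr (div_pos hw_pos h2)).ne'
  refine ⟨by simp [hs, hsin_θ1], fun t hsin ↦ ?_⟩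
  rw [abs_of_neg ha] at h1 hθ0
  have hphase : HasDerivAt (fun τ ↦ θ1 + τ * wabs / 2) (wabs / 2) t :=
    ((hasDerivAt_mul_const wabs).div_const 2).const_add θ1
  have hnum : wabs / 2 * Real.cos (θ1 + t * wabs / 2) - c0 / 2 * Real.sin (θ1 + t * wabs / 2) =
      c1 * (√(-a / c1) * Real.sin (θ0 - t * wabs / 2)) := by
    rw [hθ0, hθ1]
    linear_combination
      (mul_cos_sub_mul_sin_eq_mul_sin_arctan_sub hc1 hw_sq h1 h2 (t * wabs / 2)) / 2
  rw [funext hs, hv, abs_of_neg ha]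
  refine ((hasDerivAt_log_sin_div_sub_const_mul hphase hsin.ne' hsin_θ1).const_mul
    (1 / c1)).congr_deriv ?_
  rw [hnum]
  field_simp

/-- in the complex-w case, the travelled space
s(t) = (1/c1)(log(sin(θ1 + t|w|/2)/sin θ1) − (c0/2)t) satisfies s(0) = 0 and s' = v. -/
theorem stmt6 (c0 c1 a v0 : ℝ) (hc0 : 0 ≤ c0) (hc1 : 0 < c1) (ha : a < 0) (hv0 : 0 ≤ v0)
    (hdisc : c0 ^ 2 + 4 * a * c1 < 0)
    (h1 : 0 < v0 * c0 + 2 * |a|) (h2 : 0 < 2 * c1 * v0 + c0)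
    (wabs θ0 θ1 : ℝ)
    (hwabs : wabs = Real.sqrt (-(c0 ^ 2 + 4 * a * c1)))
    (hθ0 : θ0 = Real.arctan (v0 * wabs / (v0 * c0 + 2 * |a|)))
    (hθ1 : θ1 = Real.arctan (wabs / (2 * c1 * v0 + c0)))
    (s v : ℝ → ℝ)
    (hs : ∀ t, s t = (1 / c1) *
        (Real.log (Real.sin (θ1 + t * wabs / 2) / Real.sin θ1) - (c0 / 2) * t))
    (hv : ∀ t, v t = Real.sqrt (|a| / c1) * Real.sin (θ0 - t * wabs / 2) /
        Real.sin (θ1 + t * wabs / 2)) :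
    s 0 = 0 ∧
      ∀ t : ℝ, 0 < Real.sin (θ1 + t * wabs / 2) → HasDerivAt s (v t) t :=
  stmt6_general c0 c1 a v0 hc1 hdisc h1 h2 wabs θ0 θ1 hwabs hθ0 hθ1 s v hs hv
end

section
/- Let c0 ≥ 0, c1 > 0, a ∈ ℝ, v0 ≥ 0 with w := √(c0² + 4·a·c1) > 0 and β := (w − c0)/2 ≠ 0, a + v0·β ≠ 0, 1 − w·v0/(a + v0·β) > 0, 1 − v0·c1/β > 0 and 1 + v0·c1/α > 0. Set t0 := (1/w)·log(1 − w·v0/(a + v0·β)) and s(t) := (β/c1)·t + (1/c1)·log(1 − c1·(β/c1 − v0)·E(−t,w)). Then s(t0) = (1/w)·[ (β/c1)·log(1 − v0·c1/β) + (α/c1)·log(1 + v0·c1/α) ]. -/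
/-!
Write `P = 1 - v0 * c1 / β` and `Q = 1 + v0 * c1 / α`. Since `α * β = a * c1` and `α + β = w`,
the definition of `t0` says `exp (w * t0) = P / Q`, and at `t = t0` the argument of the logarithm
in `s` collapses to `Q`. Hence `c1 * s t0 = (β / w) * log (P / Q) + log Q`, in which `log Q` has
coefficient `1 - β / w = α / w`.
-/

section

variable {a c c0 u v w x α β P Q : ℝ}

lemma half_add_mul_half_sub_of_eq_sqrt (hw : w = Real.sqrt (c0 ^ 2 + 4 * a * c)) (hw0 : 0 < w) :
    (w + c0) / 2 * ((w - c0) / 2) = a * c := by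
  have hsq : w ^ 2 = c0 ^ 2 + 4 * a * c := by
    rw [hw, Real.sq_sqrt (Real.sqrt_pos.mp (hw ▸ hw0)).le]
  linear_combination hsq / 4

lemma one_sub_add_mul_div_eq_div (hα : α ≠ 0) (hβ : β ≠ 0) (hprod : α * β = a * c)
    (hQ : 1 + v * c / α ≠ 0) :
    1 - (α + β) * v / (a + v * β) = (1 - v * c / β) / (1 + v * c / α) := by
  have hc : c ≠ 0 := right_ne_zero_of_mul (hprod ▸ mul_ne_zero hα hβ)
  have ha : a = α * β / c := eq_div_of_mul_eq hc hprod.symm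
  have hden : a + v * β = α * β / c * (1 + v * c / α) := by
    rw [ha]
    field_simp
  have hdiff : (1 + v * c / α) - (1 - v * c / β) = (α + β) * v * c / (α * β) := by
    field_simp
    ring
  calc 1 - (α + β) * v / (a + v * β)
      = 1 - (α + β) * v * c / (α * β) / (1 + v * c / α) := by
        rw [hden]
        field_simp
    _ = (1 - v * c / β) / (1 + v * c / α) := by
        rw [← hdiff, sub_div, div_self hQ, sub_sub_cancel]

lemma exp_mul_neg_one_div_mul_log (hw : w ≠ 0) (hx : 0 < x) :
    Real.exp (w * -(1 / w * Real.log x)) = x⁻¹ := by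
  have hlog : w * -(1 / w * Real.log x) = -Real.log x := by field_simp
  rw [hlog, Real.exp_neg, Real.exp_log hx]

lemma one_sub_sub_mul_one_sub_div (hα : α ≠ 0) (hβ : β ≠ 0) (hw : α + β ≠ 0)
    (hP : 1 - u / β ≠ 0) :
    1 - (β - u) * ((1 - (1 + u / α) / (1 - u / β)) / (α + β)) = 1 + u / α := by
  have hfactor : β - u = β * (1 - u / β) := by field_simp
  have hdiff : (1 - u / β) - (1 + u / α) = -(u * (α + β) / (α * β)) := by
    field_simp
    ring
  calc 1 - (β - u) * ((1 - (1 + u / α) / (1 - u / β)) / (α + β))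
      = 1 - β * ((1 - u / β) - (1 + u / α)) / (α + β) := by
        rw [hfactor, one_sub_div hP, mul_div_assoc', mul_assoc, mul_div_cancel₀ _ hP]
    _ = 1 + u / α := by
        rw [hdiff]
        field_simp
        ring

lemma div_mul_log_div_add_log (hw : α + β ≠ 0) (hP : P ≠ 0) (hQ : Q ≠ 0) :
    β / c * (1 / (α + β) * Real.log (P / Q)) + 1 / c * Real.log Q =
      1 / (α + β) * (β / c * Real.log P + α / c * Real.log Q) := by
  rw [Real.log_div hP hQ]
  field_simp
  ring

end

theorem stmt7_general {a c1 v0 w α β : ℝ} (hα : α ≠ 0) (hβ : β ≠ 0) (hw : w = α + β)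
    (hw0 : w ≠ 0) (hprod : α * β = a * c1)
    (hP : 0 < 1 - v0 * c1 / β) (hQ : 0 < 1 + v0 * c1 / α)
    {E : ℝ → ℝ → ℝ} (hE : ∀ t u, E t u = (1 - Real.exp (u * t)) / u)
    {t0 : ℝ} (ht0 : t0 = (1 / w) * Real.log (1 - w * v0 / (a + v0 * β)))
    {s : ℝ → ℝ}
    (hs : ∀ t, s t = (β / c1) * t +
        (1 / c1) * Real.log (1 - c1 * (β / c1 - v0) * E (-t) w)) :
    s t0 = (1 / w) * ((β / c1) * Real.log (1 - v0 * c1 / β) +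
        (α / c1) * Real.log (1 + v0 * c1 / α)) := by
  subst w
  rw [one_sub_add_mul_div_eq_div hα hβ hprod hQ.ne'] at ht0
  have hc1 : c1 ≠ 0 := right_ne_zero_of_mul (hprod ▸ mul_ne_zero hα hβ)
  have hcoeff : c1 * (β / c1 - v0) = β - v0 * c1 := by field_simp
  have hexp : Real.exp ((α + β) * -t0) = (1 + v0 * c1 / α) / (1 - v0 * c1 / β) := by
    rw [ht0, exp_mul_neg_one_div_mul_log hw0 (div_pos hP hQ), inv_div]
  have harg : 1 - c1 * (β / c1 - v0) * E (-t0) (α + β) = 1 + v0 * c1 / α := by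
    rw [hcoeff, hE, hexp, one_sub_sub_mul_one_sub_div hα hβ hw0 hP.ne']
  rw [hs, harg, ht0, div_mul_log_div_add_log hw0 hP.ne' hQ.ne']

/-- the value of the travelled space at the time t0 where the speed vanishes. -/
theorem stmt7 (c0 c1 a v0 : ℝ) (hc0 : 0 ≤ c0) (hc1 : 0 < c1) (hv0 : 0 ≤ v0)
    (w α β : ℝ) (hw : w = Real.sqrt (c0 ^ 2 + 4 * a * c1)) (hwpos : 0 < w)
    (hα : α = (w + c0) / 2) (hβ : β = (w - c0) / 2) (hβ0 : β ≠ 0)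
    (h1 : a + v0 * β ≠ 0) (h2 : 0 < 1 - w * v0 / (a + v0 * β))
    (h3 : 0 < 1 - v0 * c1 / β) (h4 : 0 < 1 + v0 * c1 / α)
    (E : ℝ → ℝ → ℝ) (hE : ∀ t u, E t u = (1 - Real.exp (u * t)) / u)
    (t0 : ℝ) (ht0 : t0 = (1 / w) * Real.log (1 - w * v0 / (a + v0 * β)))
    (s : ℝ → ℝ)
    (hs : ∀ t, s t = (β / c1) * t +
        (1 / c1) * Real.log (1 - c1 * (β / c1 - v0) * E (-t) w)) :
    s t0 = (1 / w) * ((β / c1) * Real.log (1 - v0 * c1 / β) +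
        (α / c1) * Real.log (1 + v0 * c1 / α)) := by
  have hα0 : 0 < α := by linarith
  exact stmt7_general hα0.ne' hβ0 (by linarith) hwpos.ne'
    (hα ▸ hβ ▸ half_add_mul_half_sub_of_eq_sqrt hw hwpos) h3 h4 hE ht0 hs
end

section
/- Let c0 ≥ 0, c1 > 0, a < 0, v0 ≥ 0 with c0² + 4·a·c1 < 0, v0·c0 + 2·|a| > 0 and 2·c1·v0 + c0 > 0. Set t_v0 := 2·θ0/|w| and s(t) := (1/c1)·( log( sin(θ1 + t·|w|/2)/sin θ1 ) − (c0/2)·t ). Then s(t_v0) = (1/(2·c1))·[ log(1 + a0/|a|) − c0·t_v0 ], where a0 := (c1·v0 + c0)·v0. -/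
/-!
Since `t_v0 * |w| / 2 = θ0`, everything hinges on the ratio
`sin (θ1 + θ0) / sin θ1 = (1 + tan θ0 / tan θ1) * cos θ0`. As `|w|² = 4|a|c1 - c0²`, the
denominator `D = v0 c0 + 2|a|` of `tan θ0` satisfies `D² + (v0 |w|)² = 4|a| (|a| + a0)`. Hence
`cos θ0 = D / (2 √(|a| (|a| + a0)))`, while `1 + tan θ0 / tan θ1 = 2 (|a| + a0) / D`, and the
ratio is `√(1 + a0 / |a|)`.
-/

open Real

theorem sin_arctan_add_arctan_div_sin_arctan {x : ℝ} (y : ℝ) (hx : x ≠ 0) :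
    sin (arctan x + arctan y) / sin (arctan x) = (1 + y / x) / √(1 + y ^ 2) := by
  have hsqrt : √(1 + x ^ 2) ≠ 0 := by positivity
  rw [sin_add, sin_arctan, cos_arctan, sin_arctan, cos_arctan]
  field_simp

section Quadratic

variable {K : Type*} [Field K] {b c₀ c₁ v w : K}

theorem sq_add_sq_eq_four_mul_quadratic (hw : w ^ 2 = 4 * b * c₁ - c₀ ^ 2) :
    (v * c₀ + 2 * b) ^ 2 + (v * w) ^ 2 = 4 * b * (b + (c₁ * v + c₀) * v) := by
  linear_combination v ^ 2 * hw

theorem one_add_div_sq_eq_quadratic_div_sq (hw : w ^ 2 = 4 * b * c₁ - c₀ ^ 2)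
    (hD : v * c₀ + 2 * b ≠ 0) :
    1 + (v * w / (v * c₀ + 2 * b)) ^ 2 =
      4 * b * (b + (c₁ * v + c₀) * v) / (v * c₀ + 2 * b) ^ 2 := by
  rw [← sq_add_sq_eq_four_mul_quadratic hw, div_pow, one_add_div (pow_ne_zero 2 hD)]

theorem one_add_div_div_eq_quadratic_div (hw : w ≠ 0) (hD : v * c₀ + 2 * b ≠ 0) :
    1 + v * w / (v * c₀ + 2 * b) / (w / (2 * c₁ * v + c₀)) =
      2 * (b + (c₁ * v + c₀) * v) / (v * c₀ + 2 * b) := by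
  rw [div_div_eq_mul_div]
  field_simp
  ring

end Quadratic

theorem quadratic_pos_of_sq_eq {b c₀ c₁ v w : ℝ} (hw : w ^ 2 = 4 * b * c₁ - c₀ ^ 2) (hb : 0 < b)
    (hD : v * c₀ + 2 * b ≠ 0) : 0 < b + (c₁ * v + c₀) * v := by
  have hprod : 0 < 4 * b * (b + (c₁ * v + c₀) * v) := by
    rw [← sq_add_sq_eq_four_mul_quadratic hw]
    positivity
  exact pos_of_mul_pos_right hprod (by positivity)

theorem sin_arctan_add_arctan_div_sin_arctan_eq_sqrt {b c₀ c₁ v w : ℝ}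
    (hw : w ^ 2 = 4 * b * c₁ - c₀ ^ 2) (hw₀ : w ≠ 0) (hb : 0 < b)
    (hD : 0 < v * c₀ + 2 * b) (hE : 2 * c₁ * v + c₀ ≠ 0) :
    sin (arctan (w / (2 * c₁ * v + c₀)) + arctan (v * w / (v * c₀ + 2 * b))) /
        sin (arctan (w / (2 * c₁ * v + c₀))) =
      √(1 + (c₁ * v + c₀) * v / b) := by
  have hq : 0 < b + (c₁ * v + c₀) * v := quadratic_pos_of_sq_eq hw hb hD.ne'
  rw [sin_arctan_add_arctan_div_sin_arctan _ (div_ne_zero hw₀ hE),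
    one_add_div_div_eq_quadratic_div hw₀ hD.ne', one_add_div_sq_eq_quadratic_div_sq hw hD.ne',
    one_add_div hb.ne']
  generalize b + (c₁ * v + c₀) * v = q at hq ⊢
  generalize v * c₀ + 2 * b = D at hD ⊢
  calc 2 * q / D / √(4 * b * q / D ^ 2)
      = √((2 * q / D) ^ 2) / √(4 * b * q / D ^ 2) := by rw [sqrt_sq (by positivity)]
    _ = √((2 * q / D) ^ 2 / (4 * b * q / D ^ 2)) := (sqrt_div (by positivity) _).symm
    _ = √(q / b) := by
      congr 1
      field_simp
      norm_num

theorem stmt8_general {c0 c1 a v0 : ℝ} (ha : a < 0) (hdisc : c0 ^ 2 + 4 * a * c1 < 0)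
    (h1 : 0 < v0 * c0 + 2 * |a|) (h2 : 2 * c1 * v0 + c0 ≠ 0) {wabs θ0 θ1 a0 : ℝ}
    (hwabs : wabs = √(-(c0 ^ 2 + 4 * a * c1)))
    (hθ0 : θ0 = arctan (v0 * wabs / (v0 * c0 + 2 * |a|)))
    (hθ1 : θ1 = arctan (wabs / (2 * c1 * v0 + c0)))
    (ha0 : a0 = (c1 * v0 + c0) * v0) {tv0 : ℝ} (htv0 : tv0 = 2 * θ0 / wabs) {s : ℝ → ℝ}
    (hs : ∀ t, s t = (1 / c1) * (log (sin (θ1 + t * wabs / 2) / sin θ1) - (c0 / 2) * t)) :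
    s tv0 = (1 / (2 * c1)) * (log (1 + a0 / |a|) - c0 * tv0) := by
  have hb : 0 < |a| := abs_pos.mpr ha.ne
  have hw₀ : wabs ≠ 0 := by
    rw [hwabs]
    exact (sqrt_pos.mpr (neg_pos.mpr hdisc)).ne'
  have hw : wabs ^ 2 = 4 * |a| * c1 - c0 ^ 2 := by
    rw [hwabs, sq_sqrt (neg_pos.mpr hdisc).le, abs_of_neg ha]
    ring
  have hangle : tv0 * wabs / 2 = θ0 := by
    rw [htv0]
    field_simp
  have hratio : sin (θ1 + θ0) / sin θ1 = √(1 + a0 / |a|) := by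
    rw [hθ0, hθ1, ha0]
    exact sin_arctan_add_arctan_div_sin_arctan_eq_sqrt hw hw₀ hb h1 h2
  have hpos : 0 ≤ 1 + a0 / |a| := by
    rw [one_add_div hb.ne', ha0]
    exact (div_pos (quadratic_pos_of_sq_eq hw hb h1.ne') hb).le
  rw [hs, hangle, hratio, log_sqrt hpos]
  ring

/-- in the complex-w case, the value of the travelled space at
t_v0 = 2θ0/|w| equals (1/(2c1))(log(1 + a0/|a|) − c0·t_v0). -/
theorem stmt8 (c0 c1 a v0 : ℝ) (hc0 : 0 ≤ c0) (hc1 : 0 < c1) (ha : a < 0) (hv0 : 0 ≤ v0)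
    (hdisc : c0 ^ 2 + 4 * a * c1 < 0)
    (h1 : 0 < v0 * c0 + 2 * |a|) (h2 : 0 < 2 * c1 * v0 + c0)
    (wabs θ0 θ1 a0 : ℝ)
    (hwabs : wabs = Real.sqrt (-(c0 ^ 2 + 4 * a * c1)))
    (hθ0 : θ0 = Real.arctan (v0 * wabs / (v0 * c0 + 2 * |a|)))
    (hθ1 : θ1 = Real.arctan (wabs / (2 * c1 * v0 + c0)))
    (ha0 : a0 = (c1 * v0 + c0) * v0)
    (tv0 : ℝ) (htv0 : tv0 = 2 * θ0 / wabs)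
    (s : ℝ → ℝ)
    (hs : ∀ t, s t = (1 / c1) *
        (Real.log (Real.sin (θ1 + t * wabs / 2) / Real.sin θ1) - (c0 / 2) * t)) :
    s tv0 = (1 / (2 * c1)) * (Real.log (1 + a0 / |a|) - c0 * tv0) :=
  stmt8_general ha hdisc h1 h2.ne' hwabs hθ0 hθ1 ha0 htv0 hs
end

section
/- For all real t, w, c0 with w ≠ 0, the series Σ_{n=1}^∞ (t^{2n}/(2^{2n}·(2n)!))·[2 + c0·t/(2n+1)]·(c0^{2n} − w^{2n}) converges to 2·exp(t·c0/2) − exp(−t·w/2) − exp(t·w/2) + (c0/w)·(exp(−t·w/2) − exp(t·w/2)); equivalently, when w² ≠ c0², the function F(t,w,c0) := exp(t·c0/2)·(1/w)·[E(−t,(w+c0)/2) + E(t,(w−c0)/2)] satisfies F(t,w,c0) = −Σ_{n=1}^∞ (f_n·t^{2n}/(2^{2n}·(2n)!))·[4 + 2·c0·t/(2n+1)] with f_n := (w^{2n} − c0^{2n})/(w² − c0²). -/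
/-!
With `z = t * u / 2`, the terms `z ^ (2 * n) / (2 * n)! * (1 + κ * z / (2 * n + 1))` sum to
`cosh z + κ * sinh z`. The series of the theorem is twice the difference of the case `u = c0`,
`κ = 1` and the case `u = w`, `κ = c0 / w`. In both cases `κ * z = t * c0 / 2`, so the `n = 0` terms
cancel and the sum may start at `n = 1`. Multiplying by `-2 / (w ^ 2 - c0 ^ 2)` gives the
expansion of `F`.
-/

open Complex

theorem hasSum_cosh_add_mul_sinh (κ z : ℂ) :
    HasSum (fun n : ℕ => z ^ (2 * n) / (Nat.factorial (2 * n) : ℂ) * (1 + κ * z / (2 * n + 1)))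
      (cosh z + κ * sinh z) := by
  refine ((hasSum_cosh z).add ((hasSum_sinh z).mul_left κ)).congr_fun fun n => ?_
  have odd_ne : (2 * n + 1 : ℂ) ≠ 0 := by exact_mod_cast (2 * n).succ_ne_zero
  have factorial_ne : (Nat.factorial (2 * n) : ℂ) ≠ 0 := by
    exact_mod_cast (2 * n).factorial_ne_zero
  rw [Nat.factorial_succ, pow_succ]
  push_cast
  field_simp

theorem hasSum_succ_cosh_add_mul_sinh (κ z : ℂ) :
    HasSum
      (fun n : ℕ => z ^ (2 * (n + 1)) / (Nat.factorial (2 * (n + 1)) : ℂ) *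
        (1 + κ * z / (2 * n + 3)))
      (cosh z + κ * sinh z - (1 + κ * z)) := by
  have tail := (hasSum_nat_add_iff' 1).mpr (hasSum_cosh_add_mul_sinh κ z)
  have head_eq : ∑ i ∈ Finset.range 1,
      z ^ (2 * i) / (Nat.factorial (2 * i) : ℂ) * (1 + κ * z / (2 * i + 1)) = 1 + κ * z := by
    simp
  rw [head_eq] at tail
  refine tail.congr_fun fun n => ?_
  push_cast
  ring

theorem hasSum_even_pow_sub_pow (t c : ℂ) {w : ℂ} (hw : w ≠ 0) :
    HasSum
      (fun n : ℕ => t ^ (2 * (n + 1)) / (2 ^ (2 * (n + 1)) * (Nat.factorial (2 * (n + 1)) : ℂ)) *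
        (2 + c * t / (2 * n + 3)) * (c ^ (2 * (n + 1)) - w ^ (2 * (n + 1))))
      (2 * exp (t * c / 2) - exp (-t * w / 2) - exp (t * w / 2) +
        c / w * (exp (-t * w / 2) - exp (t * w / 2))) := by
  have linear_eq : c / w * (t * w / 2) = t * c / 2 := by field_simp
  have series := ((hasSum_succ_cosh_add_mul_sinh 1 (t * c / 2)).sub
    (hasSum_succ_cosh_add_mul_sinh (c / w) (t * w / 2))).mul_left 2
  rw [linear_eq, one_mul, one_mul] at series
  have sum_eq :
      2 * exp (t * c / 2) - exp (-t * w / 2) - exp (t * w / 2) +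
          c / w * (exp (-t * w / 2) - exp (t * w / 2)) =
        2 * (cosh (t * c / 2) + sinh (t * c / 2) - (1 + t * c / 2) -
          (cosh (t * w / 2) + c / w * sinh (t * w / 2) - (1 + t * c / 2))) := by
    have neg_eq : -t * w / 2 = -(t * w / 2) := by ring
    rw [cosh_add_sinh, cosh, sinh, neg_eq]
    ring
  rw [sum_eq]
  refine series.congr_fun fun n => ?_
  simp only [div_pow, mul_pow]
  ring

theorem exp_mul_one_sub_exp_div_add_eq (t : ℂ) {w c : ℂ} (hw : w ≠ 0) (hwc : w ^ 2 ≠ c ^ 2) :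
    exp (t * c / 2) * (1 / w) *
        ((1 - exp ((w + c) / 2 * (-t))) / ((w + c) / 2) +
          (1 - exp ((w - c) / 2 * t)) / ((w - c) / 2)) =
      2 / (w ^ 2 - c ^ 2) *
        (2 * exp (t * c / 2) - exp (-t * w / 2) - exp (t * w / 2) +
          c / w * (exp (-t * w / 2) - exp (t * w / 2))) := by
  have factored : w ^ 2 - c ^ 2 = (w + c) * (w - c) := sq_sub_sq w c
  obtain ⟨add_ne, sub_ne⟩ : w + c ≠ 0 ∧ w - c ≠ 0 :=
    mul_ne_zero_iff.mp (factored ▸ sub_ne_zero.mpr hwc)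
  have exp_neg_tw : exp (-t * w / 2) = exp (t * c / 2) * exp ((w + c) / 2 * (-t)) := by
    rw [← exp_add]
    ring_nf
  have exp_tw : exp (t * w / 2) = exp (t * c / 2) * exp ((w - c) / 2 * t) := by
    rw [← exp_add]
    ring_nf
  rw [exp_neg_tw, exp_tw, factored]
  field_simp
  ring

theorem stmt11_general (t w c0 : ℂ) (hw : w ≠ 0) :
    HasSum (fun n : ℕ =>
        t ^ (2 * (n + 1)) / (2 ^ (2 * (n + 1)) * (Nat.factorial (2 * (n + 1)) : ℂ)) *
          (2 + c0 * t / (2 * (n : ℂ) + 3)) *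
          (c0 ^ (2 * (n + 1)) - w ^ (2 * (n + 1))))
      (2 * exp (t * c0 / 2) - exp (-t * w / 2) - exp (t * w / 2) +
        (c0 / w) * (exp (-t * w / 2) - exp (t * w / 2))) ∧
    (w ^ 2 ≠ c0 ^ 2 →
      HasSum (fun n : ℕ =>
          ((w ^ (2 * (n + 1)) - c0 ^ (2 * (n + 1))) / (w ^ 2 - c0 ^ 2)) *
            t ^ (2 * (n + 1)) /
            (2 ^ (2 * (n + 1)) * (Nat.factorial (2 * (n + 1)) : ℂ)) *
            (4 + 2 * c0 * t / (2 * (n : ℂ) + 3)))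
        (-(exp (t * c0 / 2) * (1 / w) *
            ((1 - exp ((w + c0) / 2 * (-t))) / ((w + c0) / 2) +
             (1 - exp ((w - c0) / 2 * t)) / ((w - c0) / 2))))) := by
  have series := hasSum_even_pow_sub_pow t c0 hw
  refine ⟨series, fun hwc => ?_⟩
  rw [exp_mul_one_sub_exp_div_add_eq t hw hwc]
  refine (series.mul_left (2 / (w ^ 2 - c0 ^ 2))).neg.congr_fun fun n => ?_
  ring

/-- the power-series expansion of the auxiliary function F(t,w,c0). -/
theorem stmt11 (t w c0 : ℝ) (hw : w ≠ 0) :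
    HasSum (fun n : ℕ =>
        t ^ (2 * (n + 1)) / (2 ^ (2 * (n + 1)) * (Nat.factorial (2 * (n + 1)) : ℝ)) *
          (2 + c0 * t / (2 * (n : ℝ) + 3)) *
          (c0 ^ (2 * (n + 1)) - w ^ (2 * (n + 1))))
      (2 * Real.exp (t * c0 / 2) - Real.exp (-t * w / 2) - Real.exp (t * w / 2) +
        (c0 / w) * (Real.exp (-t * w / 2) - Real.exp (t * w / 2))) ∧
    (w ^ 2 ≠ c0 ^ 2 →
      HasSum (fun n : ℕ =>
          ((w ^ (2 * (n + 1)) - c0 ^ (2 * (n + 1))) / (w ^ 2 - c0 ^ 2)) *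
            t ^ (2 * (n + 1)) /
            (2 ^ (2 * (n + 1)) * (Nat.factorial (2 * (n + 1)) : ℝ)) *
            (4 + 2 * c0 * t / (2 * (n : ℝ) + 3)))
        (-(Real.exp (t * c0 / 2) * (1 / w) *
            ((1 - Real.exp ((w + c0) / 2 * (-t))) / ((w + c0) / 2) +
             (1 - Real.exp ((w - c0) / 2 * t)) / ((w - c0) / 2))))) := by
  exact_mod_cast stmt11_general t w c0 (ofReal_ne_zero.mpr hw)
end

section
/- Let c0 ≥ 0, c1 > 0, a < 0, v0 ≥ 0 with c0² + 4·a·c1 < 0, v0·c0 + 2·|a| > 0 and 2·c1·v0 + c0 > 0. Then for every real t with cos(t·|w|/2) + (2·c1·v0 + c0)·S(t/2,|w|) ≠ 0 and sin(θ1 + t·|w|/2) ≠ 0, one has √(|a|/c1)·sin(θ0 − t·|w|/2)/sin(θ1 + t·|w|/2) = ( v0·cos(t·|w|/2) − (c0·v0 + 2·|a|)·S(t/2,|w|) ) / ( cos(t·|w|/2) + (2·c1·v0 + c0)·S(t/2,|w|) ). -/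
/-!
Write `φ = t * wabs / 2`. The function `x * cos φ + y * sin φ` is, for `y ≠ 0`, a sinusoid of phase
`arctan (x / y)` and amplitude `√(x ^ 2 + y ^ 2)`, up to the sign of `y`. After multiplication by
`wabs`, the numerator and the denominator on the right-hand side have phases `θ0` and `θ1` and
squared amplitudes `4 * |a| * q` and `4 * c1 * q` with the same `q = c1 * v0 ^ 2 + c0 * v0 + |a|`:
these are the two ways of completing the square in the binary form
`c1 * X ^ 2 + c0 * X * Y + |a| * Y ^ 2` at `(v0, 1)`. Hence the factor `√(|a| / c1)`.
-/

open Real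

theorem sign_eq_sign_of_mul_pos {R : Type*} [Ring R] [LinearOrder R] [IsStrictOrderedRing R]
    {x y : R} (h : 0 < x * y) : SignType.sign x = SignType.sign y := by
  obtain ⟨hx, hy⟩ | ⟨hx, hy⟩ := mul_pos_iff.mp h
  · rw [sign_pos hx, sign_pos hy]
  · rw [sign_neg hx, sign_neg hy]

section HarmonicAddition

variable {y : ℝ}

theorem sqrt_sq_add_sq_mul_cos_arctan_div (x : ℝ) (hy : y ≠ 0) :
    √(x ^ 2 + y ^ 2) * cos (arctan (x / y)) = |y| := by
  have hsqrt : √(x ^ 2 + y ^ 2) = |y| * √(1 + (x / y) ^ 2) := by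
    rw [← sqrt_sq_eq_abs, ← sqrt_mul (sq_nonneg y)]
    congr 1
    field_simp
    ring
  have hpos : 0 < √(1 + (x / y) ^ 2) := by positivity
  rw [hsqrt, cos_arctan, mul_one_div, mul_div_cancel_right₀ _ hpos.ne']

theorem sqrt_sq_add_sq_mul_sin_arctan_div (x : ℝ) (hy : y ≠ 0) :
    √(x ^ 2 + y ^ 2) * sin (arctan (x / y)) = SignType.sign y * x :=
  calc √(x ^ 2 + y ^ 2) * sin (arctan (x / y))
      = √(x ^ 2 + y ^ 2) * cos (arctan (x / y)) * (x / y) := by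
        rw [← tan_mul_cos (cos_arctan_pos _).ne', tan_arctan]
        ring
    _ = SignType.sign y * x := by
        rw [sqrt_sq_add_sq_mul_cos_arctan_div x hy, ← sign_mul_self, mul_assoc,
          mul_div_cancel₀ _ hy]

theorem sqrt_sq_add_sq_mul_sin_arctan_div_add (x : ℝ) (hy : y ≠ 0) (φ : ℝ) :
    √(x ^ 2 + y ^ 2) * sin (arctan (x / y) + φ) =
      SignType.sign y * (x * cos φ + y * sin φ) := by
  rw [sin_add]
  linear_combination cos φ * sqrt_sq_add_sq_mul_sin_arctan_div x hy +
    sin φ * sqrt_sq_add_sq_mul_cos_arctan_div x hy - sin φ * sign_mul_self y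

theorem mul_sin_arctan_add_mul_eq_mul_sin_arctan_add {x₀ y₀ x₁ y₁ r : ℝ} (hy : 0 < y₀ * y₁)
    (hr : √(x₀ ^ 2 + y₀ ^ 2) = r * √(x₁ ^ 2 + y₁ ^ 2)) (ψ φ : ℝ) :
    r * sin (arctan (x₀ / y₀) + ψ) * (x₁ * cos φ + y₁ * sin φ) =
      (x₀ * cos ψ + y₀ * sin ψ) * sin (arctan (x₁ / y₁) + φ) := by
  have hy₀ : y₀ ≠ 0 := left_ne_zero_of_mul hy.ne'
  have hy₁ : y₁ ≠ 0 := right_ne_zero_of_mul hy.ne'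
  have hψ := sqrt_sq_add_sq_mul_sin_arctan_div_add x₀ hy₀ ψ
  have hφ := sqrt_sq_add_sq_mul_sin_arctan_div_add x₁ hy₁ φ
  rw [hr, sign_eq_sign_of_mul_pos hy] at hψ
  have hamp : √(x₁ ^ 2 + y₁ ^ 2) ≠ 0 := by positivity
  apply mul_left_cancel₀ hamp
  linear_combination (x₁ * cos φ + y₁ * sin φ) * hψ - (x₀ * cos ψ + y₀ * sin ψ) * hφ

end HarmonicAddition

section BinaryForm

variable {R : Type*} [CommRing R]

theorem mul_sq_add_sq_of_sq_eq_neg_discrim {a b c w : R}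
    (hw : w ^ 2 = -discrim a b c) (x y : R) :
    (w * y) ^ 2 + (2 * a * x + b * y) ^ 2 = 4 * a * (a * x ^ 2 + b * x * y + c * y ^ 2) := by
  rw [discrim] at hw
  linear_combination y ^ 2 * hw

theorem discrim_swap (a b c : R) : discrim c b a = discrim a b c := by
  simp only [discrim]
  ring

theorem sqrt_sq_add_sq_eq_sqrt_div_mul_of_sq_eq_neg_discrim {a b c w : ℝ} (ha : a ≠ 0)
    (hw : w ^ 2 = -discrim a b c) (x y : ℝ) :
    √((w * x) ^ 2 + (2 * c * y + b * x) ^ 2) =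
      √(c / a) * √((w * y) ^ 2 + (2 * a * x + b * y) ^ 2) := by
  rw [← sqrt_mul' _ (by positivity), mul_sq_add_sq_of_sq_eq_neg_discrim hw,
    mul_sq_add_sq_of_sq_eq_neg_discrim (hw.trans (by rw [discrim_swap]))]
  congr 1
  field_simp
  ring

end BinaryForm

theorem stmt13_general (c0 c1 a v0 : ℝ) (hc1 : 0 < c1) (hdisc : c0 ^ 2 + 4 * a * c1 < 0)
    (hsign : 0 < (v0 * c0 + 2 * |a|) * (2 * c1 * v0 + c0))
    (wabs θ0 θ1 : ℝ)
    (hwabs : wabs = √(-(c0 ^ 2 + 4 * a * c1)))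
    (hθ0 : θ0 = arctan (v0 * wabs / (v0 * c0 + 2 * |a|)))
    (hθ1 : θ1 = arctan (wabs / (2 * c1 * v0 + c0)))
    (S : ℝ → ℝ → ℝ) (hS : ∀ x u, S x u = sin (u * x) / u)
    (t : ℝ)
    (hden1 : cos (t * wabs / 2) + (2 * c1 * v0 + c0) * S (t / 2) wabs ≠ 0)
    (hden2 : sin (θ1 + t * wabs / 2) ≠ 0) :
    √(|a| / c1) * sin (θ0 - t * wabs / 2) / sin (θ1 + t * wabs / 2)
      = (v0 * cos (t * wabs / 2) - (c0 * v0 + 2 * |a|) * S (t / 2) wabs) /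
        (cos (t * wabs / 2) + (2 * c1 * v0 + c0) * S (t / 2) wabs) := by
  have ha : a < 0 := by
    by_contra! ha
    nlinarith [sq_nonneg c0, mul_nonneg ha hc1.le]
  have hw : wabs ≠ 0 := hwabs ▸ (sqrt_pos.mpr (neg_pos.mpr hdisc)).ne'
  have hw_sq : wabs ^ 2 = -discrim c1 c0 |a| := by
    rw [hwabs, sq_sqrt (neg_pos.mpr hdisc).le, discrim, abs_of_neg ha]
    ring
  have hamp : √((v0 * wabs) ^ 2 + (v0 * c0 + 2 * |a|) ^ 2) =
      √(|a| / c1) * √(wabs ^ 2 + (2 * c1 * v0 + c0) ^ 2) := by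
    convert sqrt_sq_add_sq_eq_sqrt_div_mul_of_sq_eq_neg_discrim hc1.ne' hw_sq v0 1 using 3 <;> ring
  have hSt : wabs * S (t / 2) wabs = sin (t * wabs / 2) := by
    rw [hS, mul_div_cancel₀ _ hw]
    ring_nf
  have hcross := mul_sin_arctan_add_mul_eq_mul_sin_arctan_add hsign hamp
    (-(t * wabs / 2)) (t * wabs / 2)
  rw [← hθ0, ← hθ1, ← sub_eq_add_neg, cos_neg, sin_neg, ← hSt] at hcross
  rw [div_eq_div_iff hden2 hden1]
  apply mul_left_cancel₀ hw
  linear_combination hcross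

/-- stable rewriting of the speed in the complex-w case. -/
theorem stmt13 (c0 c1 a v0 : ℝ) (hc0 : 0 ≤ c0) (hc1 : 0 < c1) (ha : a < 0) (hv0 : 0 ≤ v0)
    (hdisc : c0 ^ 2 + 4 * a * c1 < 0)
    (h1 : 0 < v0 * c0 + 2 * |a|) (h2 : 0 < 2 * c1 * v0 + c0)
    (wabs θ0 θ1 : ℝ)
    (hwabs : wabs = Real.sqrt (-(c0 ^ 2 + 4 * a * c1)))
    (hθ0 : θ0 = Real.arctan (v0 * wabs / (v0 * c0 + 2 * |a|)))
    (hθ1 : θ1 = Real.arctan (wabs / (2 * c1 * v0 + c0)))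
    (S : ℝ → ℝ → ℝ) (hS : ∀ x u, S x u = Real.sin (u * x) / u)
    (t : ℝ)
    (hden1 : Real.cos (t * wabs / 2) + (2 * c1 * v0 + c0) * S (t / 2) wabs ≠ 0)
    (hden2 : Real.sin (θ1 + t * wabs / 2) ≠ 0) :
    Real.sqrt (|a| / c1) * Real.sin (θ0 - t * wabs / 2) / Real.sin (θ1 + t * wabs / 2)
      = (v0 * Real.cos (t * wabs / 2) - (c0 * v0 + 2 * |a|) * S (t / 2) wabs) /
        (Real.cos (t * wabs / 2) + (2 * c1 * v0 + c0) * S (t / 2) wabs) :=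
  stmt13_general c0 c1 a v0 hc1 hdisc (mul_pos h1 h2) wabs θ0 θ1 hwabs hθ0 hθ1 S hS t hden1 hden2
end

section
/- Let c0 ≥ 0, c1 > 0, a ∈ ℝ, v0 ≥ 0 with w := √(c0² + 4·a·c1) > 0 and α := (w + c0)/2 ≠ 0, β := (w − c0)/2 ≠ 0, v∞ := β/c1. Then for every real t such that both logarithm arguments are positive, v∞·t + (1/c1)·log(1 − c1·(v∞ − v0)·E(−t,w)) = (1/c1)·log( 1 − c1·a·(1/w)·(E(t,β) + E(−t,α)) + c1·v0·E(−t,w)·exp(β·t) ). -/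
/-!
The velocity solves the Riccati equation `dv/dt = a - c0 * v - c1 * v ^ 2`, `v 0 = v0`, with fixed
point `v∞ = β / c1`. If `s` is the travelled space, `y = exp (c1 * s)` solves a linear second-order
equation with characteristic roots `β` and `-α`. Both formulas for `s` are `log y / c1`; the first
one has the factor `exp (β * t)` of `y` pulled out of the logarithm as the term `v∞ * t`. For
`v0 = 0`, `y` is the mean of `exp (β * t)` and `exp (-α * t)` with weights `α / (α + β)` and
`β / (α + β)`.
-/

/-- `E t u` plays the role of `(1 - exp (u * t)) / u`. The defining equation is multiplied by `u`,
so that `E t 0` is unconstrained: both the continuous extension `E t 0 = -t` and the value `0` given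
by `x / 0 = 0` are allowed. -/
def IsExpQuotient (E : ℝ → ℝ → ℝ) : Prop :=
  ∀ t u, u * E t u = 1 - Real.exp (u * t)

namespace IsExpQuotient

open Real

variable {E : ℝ → ℝ → ℝ}

theorem of_eq_div (hE : ∀ t u, E t u = (1 - exp (u * t)) / u) : IsExpQuotient E := by
  intro t u
  rw [hE]
  exact mul_div_cancel_of_imp' fun hu => by simp [hu]

theorem one_sub_mul_add_eq_mean (hE : IsExpQuotient E) {α β : ℝ} (h : α + β ≠ 0) (t : ℝ) :
    1 - α * β * (1 / (α + β)) * (E t β + E (-t) α)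
      = (α * exp (β * t) + β * exp (α * -t)) / (α + β) := by
  have hsum : α * β * (E t β + E (-t) α)
      = α + β - (α * exp (β * t) + β * exp (α * -t)) := by
    linear_combination α * hE t β + β * hE (-t) α
  rw [mul_one_div, div_mul_eq_mul_div, hsum, sub_div, div_self h, sub_sub_cancel]

theorem exp_mul_one_sub_mul_eq_mean (hE : IsExpQuotient E) {α β : ℝ} (h : α + β ≠ 0) (t : ℝ) :
    exp (β * t) * (1 - β * E (-t) (α + β))
      = (α * exp (β * t) + β * exp (α * -t)) / (α + β) := by
  have hexp : exp (β * t) * exp ((α + β) * -t) = exp (α * -t) := by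
    rw [← exp_add]
    ring_nf
  rw [eq_div_iff h]
  linear_combination β * hexp - β * exp (β * t) * hE (-t) (α + β)

theorem exp_mul_one_sub_sub_mul (hE : IsExpQuotient E) {α β : ℝ} (h : α + β ≠ 0) (k t : ℝ) :
    exp (β * t) * (1 - (β - k) * E (-t) (α + β))
      = 1 - α * β * (1 / (α + β)) * (E t β + E (-t) α) + k * E (-t) (α + β) * exp (β * t) := by
  rw [hE.one_sub_mul_add_eq_mean h, ← hE.exp_mul_one_sub_mul_eq_mean h]
  ring

end IsExpQuotient

theorem stmt14_general {c0 c1 a v0 w α β vinf t : ℝ} (hc1 : c1 ≠ 0)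
    (hw : w ^ 2 = c0 ^ 2 + 4 * a * c1) (hw0 : w ≠ 0)
    (hα : α = (w + c0) / 2) (hβ : β = (w - c0) / 2) (hvinf : vinf = β / c1)
    {E : ℝ → ℝ → ℝ} (hE : IsExpQuotient E)
    (hpos : 0 < 1 - c1 * (vinf - v0) * E (-t) w) :
    vinf * t + (1 / c1) * Real.log (1 - c1 * (vinf - v0) * E (-t) w)
      = (1 / c1) * Real.log (1 - c1 * a * (1 / w) * (E t β + E (-t) α) +
          c1 * v0 * E (-t) w * Real.exp (β * t)) := by
  have hsum : w = α + β := by rw [hα, hβ]; ring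
  have hprod : c1 * a = α * β := by rw [hα, hβ]; linear_combination -hw / 4
  have hdiff : c1 * (vinf - v0) = β - c1 * v0 := by rw [hvinf, mul_sub, mul_div_cancel₀ _ hc1]
  have hfactor : Real.exp (β * t) * (1 - c1 * (vinf - v0) * E (-t) w)
      = 1 - c1 * a * (1 / w) * (E t β + E (-t) α) + c1 * v0 * E (-t) w * Real.exp (β * t) := by
    rw [hprod, hdiff, hsum]
    exact hE.exp_mul_one_sub_sub_mul (hsum ▸ hw0) (c1 * v0) t
  rw [← hfactor, Real.log_mul (Real.exp_ne_zero _) hpos.ne', Real.log_exp, hvinf]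
  ring

/-- stable rewriting of the travelled space for real w. -/
theorem stmt14 (c0 c1 a v0 : ℝ) (hc0 : 0 ≤ c0) (hc1 : 0 < c1) (hv0 : 0 ≤ v0)
    (w α β vinf : ℝ) (hw : w = Real.sqrt (c0 ^ 2 + 4 * a * c1)) (hwpos : 0 < w)
    (hα : α = (w + c0) / 2) (hαne : α ≠ 0) (hβ : β = (w - c0) / 2) (hβne : β ≠ 0)
    (hvinf : vinf = β / c1)
    (E : ℝ → ℝ → ℝ) (hE : ∀ t u, E t u = (1 - Real.exp (u * t)) / u)
    (t : ℝ)
    (hpos1 : 0 < 1 - c1 * (vinf - v0) * E (-t) w)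
    (hpos2 : 0 < 1 - c1 * a * (1 / w) * (E t β + E (-t) α) +
        c1 * v0 * E (-t) w * Real.exp (β * t)) :
    vinf * t + (1 / c1) * Real.log (1 - c1 * (vinf - v0) * E (-t) w)
      = (1 / c1) * Real.log (1 - c1 * a * (1 / w) * (E t β + E (-t) α) +
          c1 * v0 * E (-t) w * Real.exp (β * t)) := by
  have hw_sq : w ^ 2 = c0 ^ 2 + 4 * a * c1 :=
    hw ▸ Real.sq_sqrt (Real.sqrt_pos.mp (hw ▸ hwpos)).le
  exact stmt14_general hc1.ne' hw_sq hwpos.ne' hα hβ hvinf (.of_eq_div hE) hpos1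
end

section
/- Let f be twice continuously differentiable on a closed finite interval [a,b] with f(a)·f(b) < 0, f'(x) ≠ 0 for all x ∈ [a,b], and f''(x) ≥ 0 for all x ∈ [a,b]. If x0 ∈ [a,b] satisfies f(x0) ≥ 0, then the Newton sequence x_{k+1} := x_k − f(x_k)/f'(x_k) is well defined, stays in [a,b], is monotone, and converges to the unique zero of f in [a,b]. (Analogously, if f''(x) ≤ 0 on [a,b] and f(x0) ≤ 0.) -/
/-!
A convex function lies above its tangents. Evaluating the tangent at an iterate `u` in a zero `r`
shows that, when `f' u > 0`, the Newton step does not pass `r`, so the iterates decrease from `x 0`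
while staying above `r`. Comparing with the tangent at `r` shows moreover that a step shrinks the
distance to `r` by the factor `1 - f' r / f' u`, which is at most `1 - f' r / f' (x 0) < 1` because
`f'` is monotone. The iterates therefore converge geometrically to *every* zero of `f`, which also
makes the zero unique. The case `f' < 0` follows by the reflection `t ↦ -t`, and the concave case
by negating both `f` and `f'`, which leaves the Newton step unchanged.
-/

open Set Filter Topology

/-- The Newton step `u ↦ u - f u / f' u`. The function `f'` in the role of the derivative is an
independent argument, so that derivatives within a set and subgradients are covered too. -/
def newtonStep {K : Type*} [Field K] (f f' : K → K) (u : K) : K :=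
  u - f u / f' u

/-- `f' u` is a subgradient of `f` at every `u ∈ s`, relative to `s`: on `s` the graph of `f` lies
above the line of slope `f' u` through `(u, f u)`. -/
def IsSubgradientOn {K : Type*} [Field K] [LE K] (s : Set K) (f f' : K → K) : Prop :=
  ∀ ⦃u⦄, u ∈ s → ∀ ⦃v⦄, v ∈ s → f u + f' u * (v - u) ≤ f v

/-- `x` is a sequence of Newton iterates for `f`, with `f'` in the role of the derivative; the
starting point `x 0` is arbitrary. -/
def IsNewtonSeq {K : Type*} [Field K] (f f' : K → K) (x : ℕ → K) : Prop :=
  ∀ k, x (k + 1) = newtonStep f f' (x k)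

theorem newtonStep_neg {K : Type*} [Field K] (f f' : K → K) (u : K) :
    newtonStep (-f) (-f') u = newtonStep f f' u := by
  simp only [newtonStep, Pi.neg_apply, neg_div_neg_eq]

theorem newtonStep_comp_neg {K : Type*} [Field K] (f f' : K → K) (u : K) :
    newtonStep (fun t ↦ f (-t)) (fun t ↦ -f' (-t)) (-u) = -newtonStep f f' u := by
  simp only [newtonStep, neg_neg, div_neg]
  ring

theorem IsSubgradientOn.apply_newtonStep_nonneg {K : Type*} [Field K] [Preorder K] {s : Set K}
    {f f' : K → K} {u : K} (h : IsSubgradientOn s f f') (hu : u ∈ s)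
    (hstep : newtonStep f f' u ∈ s) (hf'u : f' u ≠ 0) : 0 ≤ f (newtonStep f f' u) :=
  calc 0 = f u + f' u * (newtonStep f f' u - u) := by rw [newtonStep]; field_simp; ring
    _ ≤ f (newtonStep f f' u) := h hu hstep

section OrderedField

variable {K : Type*} [Field K] [LinearOrder K] [IsStrictOrderedRing K]
  {s : Set K} {f f' : K → K} {r u : K} {x : ℕ → K}

theorem newtonStep_le_self (hfu : 0 ≤ f u) (hf'u : 0 < f' u) : newtonStep f f' u ≤ u :=
  sub_le_self u (div_nonneg hfu hf'u.le)

namespace IsSubgradientOn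

theorem comp_neg (h : IsSubgradientOn s f f') :
    IsSubgradientOn (-s) (fun t ↦ f (-t)) (fun t ↦ -f' (-t)) := fun u hu v hv ↦ by
  linarith [h hu hv]

theorem monotoneOn (h : IsSubgradientOn s f f') : MonotoneOn f' s := by
  intro u hu v hv huv
  rcases huv.eq_or_lt with rfl | huv
  · rfl
  · have hsum : f' u * (v - u) ≤ f' v * (v - u) := by linarith [h hu hv, h hv hu]
    exact le_of_mul_le_mul_right hsum (sub_pos.2 huv)

theorem le_newtonStep (h : IsSubgradientOn s f f') (hr : r ∈ s) (hfr : f r ≤ 0) (hu : u ∈ s)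
    (hf'u : 0 < f' u) : r ≤ newtonStep f f' u := by
  have hdiv : f u / f' u ≤ u - r := by
    rw [div_le_iff₀ hf'u]
    linarith [h hu hr]
  exact le_sub_comm.1 hdiv

theorem newtonStep_sub_le (h : IsSubgradientOn s f f') (hr : r ∈ s) (hfr : 0 ≤ f r) (hu : u ∈ s)
    (hf'u : 0 < f' u) : newtonStep f f' u - r ≤ (1 - f' r / f' u) * (u - r) := by
  have htangent : f' r * (u - r) ≤ f u := by linarith [h hr hu]
  calc newtonStep f f' u - r = u - r - f u / f' u := sub_right_comm _ _ _
    _ ≤ u - r - f' r * (u - r) / f' u := by gcongr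
    _ = (1 - f' r / f' u) * (u - r) := by ring

theorem newtonSeq_mem_Icc_and_nonneg [s.OrdConnected] (h : IsSubgradientOn s f f')
    (hpos : ∀ u ∈ s, 0 < f' u) (hr : r ∈ s) (hfr : f r = 0) (hx0 : x 0 ∈ s) (hfx0 : 0 ≤ f (x 0))
    (hx : IsNewtonSeq f f' x) (k : ℕ) :
    x k ∈ Icc r (x 0) ∧ 0 ≤ f (x k) := by
  induction k with
  | zero =>
    have hr_le : r ≤ x 0 :=
      (h.le_newtonStep hr hfr.le hx0 (hpos _ hx0)).trans (newtonStep_le_self hfx0 (hpos _ hx0))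
    exact ⟨⟨hr_le, le_rfl⟩, hfx0⟩
  | succ k ih =>
    obtain ⟨hk, hfk⟩ := ih
    have hks : x k ∈ s := s.Icc_subset hr hx0 hk
    have hstep : newtonStep f f' (x k) ∈ Icc r (x 0) :=
      ⟨h.le_newtonStep hr hfr.le hks (hpos _ hks),
        (newtonStep_le_self hfk (hpos _ hks)).trans hk.2⟩
    rw [hx k]
    exact ⟨hstep, h.apply_newtonStep_nonneg hks (s.Icc_subset hr hx0 hstep) (hpos _ hks).ne'⟩

end IsSubgradientOn

end OrderedField

section Real

variable {s : Set ℝ} {f f' f'' : ℝ → ℝ} {r : ℝ} {x : ℕ → ℝ}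

namespace IsSubgradientOn

theorem newtonSeq_sub_le_geom [s.OrdConnected] (h : IsSubgradientOn s f f')
    (hpos : ∀ u ∈ s, 0 < f' u) (hr : r ∈ s) (hfr : f r = 0) (hx0 : x 0 ∈ s) (hfx0 : 0 ≤ f (x 0))
    (hx : IsNewtonSeq f f' x) (k : ℕ) :
    x k - r ≤ (1 - f' r / f' (x 0)) ^ k * (x 0 - r) := by
  have hmem (k : ℕ) : x k ∈ Icc r (x 0) :=
    (h.newtonSeq_mem_Icc_and_nonneg hpos hr hfr hx0 hfx0 hx k).1
  have hratio : f' r / f' (x 0) ≤ 1 :=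
    (div_le_one (hpos _ hx0)).2 (h.monotoneOn hr hx0 (hmem 0).1)
  refine le_geom (u := fun k ↦ x k - r) (sub_nonneg.2 hratio) k fun j _ ↦ ?_
  have hjs : x j ∈ s := s.Icc_subset hr hx0 (hmem j)
  have hslope : f' (x j) ≤ f' (x 0) := h.monotoneOn hjs hx0 (hmem j).2
  calc x (j + 1) - r ≤ (1 - f' r / f' (x j)) * (x j - r) := by
        rw [hx j]; exact h.newtonStep_sub_le hr hfr.ge hjs (hpos _ hjs)
    _ ≤ (1 - f' r / f' (x 0)) * (x j - r) := by
        have := sub_nonneg.2 (hmem j).1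
        have := (hpos r hr).le
        have := hpos _ hjs
        gcongr

theorem newtonSeq_mem_antitone_tendsto [s.OrdConnected] (h : IsSubgradientOn s f f')
    (hpos : ∀ u ∈ s, 0 < f' u) (hr : r ∈ s) (hfr : f r = 0) (hx0 : x 0 ∈ s) (hfx0 : 0 ≤ f (x 0))
    (hx : IsNewtonSeq f f' x) :
    (∀ k, x k ∈ s) ∧ Antitone x ∧ Tendsto x atTop (𝓝 r) := by
  have hinv := h.newtonSeq_mem_Icc_and_nonneg hpos hr hfr hx0 hfx0 hx
  have hmem (k : ℕ) : x k ∈ s := s.Icc_subset hr hx0 (hinv k).1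
  have hanti : Antitone x := antitone_nat_of_succ_le fun k ↦ by
    rw [hx k]
    exact newtonStep_le_self (hinv k).2 (hpos _ (hmem k))
  have hratio_nonneg : 0 ≤ 1 - f' r / f' (x 0) :=
    sub_nonneg.2 ((div_le_one (hpos _ hx0)).2 (h.monotoneOn hr hx0 (hinv 0).1.1))
  have hratio_lt_one : 1 - f' r / f' (x 0) < 1 :=
    sub_lt_self 1 (div_pos (hpos r hr) (hpos _ hx0))
  have hgeom : Tendsto (fun k ↦ (1 - f' r / f' (x 0)) ^ k * (x 0 - r)) atTop (𝓝 0) := by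
    simpa only [zero_mul] using
      (tendsto_pow_atTop_nhds_zero_of_lt_one hratio_nonneg hratio_lt_one).mul_const (x 0 - r)
  have herror : Tendsto (fun k ↦ x k - r) atTop (𝓝 0) :=
    squeeze_zero (fun k ↦ sub_nonneg.2 (hinv k).1.1)
      (h.newtonSeq_sub_le_geom hpos hr hfr hx0 hfx0 hx) hgeom
  exact ⟨hmem, hanti, tendsto_sub_nhds_zero_iff.1 herror⟩

theorem newtonSeq_mem_monotone_tendsto [s.OrdConnected] (h : IsSubgradientOn s f f')
    (hneg : ∀ u ∈ s, f' u < 0) (hr : r ∈ s) (hfr : f r = 0) (hx0 : x 0 ∈ s) (hfx0 : 0 ≤ f (x 0))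
    (hx : IsNewtonSeq f f' x) :
    (∀ k, x k ∈ s) ∧ Monotone x ∧ Tendsto x atTop (𝓝 r) := by
  have : (-s).OrdConnected := OrdConnected.preimage_anti ‹s.OrdConnected› fun _ _ ↦ neg_le_neg
  obtain ⟨hmem, hanti, hlim⟩ := h.comp_neg.newtonSeq_mem_antitone_tendsto (r := -r) (x := -x)
    (fun u hu ↦ neg_pos.2 (hneg (-u) hu)) (neg_mem_neg.2 hr) (by simpa only [neg_neg] using hfr)
    (neg_mem_neg.2 hx0) (by simpa only [Pi.neg_apply, neg_neg] using hfx0)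
    (fun k ↦ by simp only [Pi.neg_apply, newtonStep_comp_neg, hx k])
  exact ⟨fun k ↦ neg_mem_neg.1 (hmem k), neg_neg x ▸ hanti.neg,
    neg_neg r ▸ neg_neg x ▸ hlim.neg⟩

end IsSubgradientOn

theorem isSubgradientOn_of_convexOn_of_hasDerivWithinAt (hf : ConvexOn ℝ s f)
    (hd : ∀ u ∈ s, HasDerivWithinAt f (f' u) s u) : IsSubgradientOn s f f' := by
  intro u hu v hv
  rcases lt_trichotomy u v with huv | rfl | hvu
  · have hslope : f' u ≤ (f v - f u) / (v - u) := by
      simpa only [slope_def_field] using hf.le_slope_of_hasDerivWithinAt hu hv huv (hd u hu)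
    rw [le_div_iff₀ (sub_pos.2 huv)] at hslope
    linarith
  · simp only [sub_self, mul_zero, add_zero, le_refl]
  · have hslope : (f u - f v) / (u - v) ≤ f' u := by
      simpa only [slope_def_field] using hf.slope_le_of_hasDerivWithinAt hv hu hvu (hd u hu)
    rw [div_le_iff₀ (sub_pos.2 hvu)] at hslope
    linarith

theorem newtonSeq_mem_monotone_or_antitone_tendsto_of_convexOn (hf : ConvexOn ℝ s f)
    (hd : ∀ u ∈ s, HasDerivWithinAt f (f' u) s u) (hne : ∀ u ∈ s, f' u ≠ 0)
    (hr : r ∈ s) (hfr : f r = 0) (hx0 : x 0 ∈ s) (hfx0 : 0 ≤ f (x 0))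
    (hx : IsNewtonSeq f f' x) :
    (∀ k, x k ∈ s) ∧ (Monotone x ∨ Antitone x) ∧ Tendsto x atTop (𝓝 r) := by
  have hsub := isSubgradientOn_of_convexOn_of_hasDerivWithinAt hf hd
  have : s.OrdConnected := hf.1.ordConnected
  rcases hasDerivWithinAt_forall_lt_or_forall_gt_of_forall_ne hf.1 hd hne with hneg | hpos
  · obtain ⟨hmem, hmono, hlim⟩ := hsub.newtonSeq_mem_monotone_tendsto hneg hr hfr hx0 hfx0 hx
    exact ⟨hmem, .inl hmono, hlim⟩
  · obtain ⟨hmem, hanti, hlim⟩ := hsub.newtonSeq_mem_antitone_tendsto hpos hr hfr hx0 hfx0 hx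
    exact ⟨hmem, .inr hanti, hlim⟩

theorem newtonSeq_mem_monotone_or_antitone_tendsto_of_concaveOn (hf : ConcaveOn ℝ s f)
    (hd : ∀ u ∈ s, HasDerivWithinAt f (f' u) s u) (hne : ∀ u ∈ s, f' u ≠ 0)
    (hr : r ∈ s) (hfr : f r = 0) (hx0 : x 0 ∈ s) (hfx0 : f (x 0) ≤ 0)
    (hx : IsNewtonSeq f f' x) :
    (∀ k, x k ∈ s) ∧ (Monotone x ∨ Antitone x) ∧ Tendsto x atTop (𝓝 r) :=
  newtonSeq_mem_monotone_or_antitone_tendsto_of_convexOn hf.neg (fun u hu ↦ (hd u hu).neg)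
    (fun u hu ↦ neg_ne_zero.2 (hne u hu)) hr (neg_eq_zero.2 hfr) hx0 (neg_nonneg.2 hfx0)
    (fun k ↦ (hx k).trans (newtonStep_neg f f' (x k)).symm)

theorem convexOn_of_forall_mem_hasDerivWithinAt2_nonneg (hs : Convex ℝ s)
    (hd1 : ∀ u ∈ s, HasDerivWithinAt f (f' u) s u)
    (hd2 : ∀ u ∈ s, HasDerivWithinAt f' (f'' u) s u) (hf'' : ∀ u ∈ s, 0 ≤ f'' u) :
    ConvexOn ℝ s f :=
  convexOn_of_hasDerivWithinAt2_nonneg hs (HasDerivWithinAt.continuousOn hd1)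
    (fun u hu ↦ (hd1 u (interior_subset hu)).mono interior_subset)
    (fun u hu ↦ (hd2 u (interior_subset hu)).mono interior_subset)
    (fun u hu ↦ hf'' u (interior_subset hu))

theorem concaveOn_of_forall_mem_hasDerivWithinAt2_nonpos (hs : Convex ℝ s)
    (hd1 : ∀ u ∈ s, HasDerivWithinAt f (f' u) s u)
    (hd2 : ∀ u ∈ s, HasDerivWithinAt f' (f'' u) s u) (hf'' : ∀ u ∈ s, f'' u ≤ 0) :
    ConcaveOn ℝ s f :=
  concaveOn_of_hasDerivWithinAt2_nonpos hs (HasDerivWithinAt.continuousOn hd1)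
    (fun u hu ↦ (hd1 u (interior_subset hu)).mono interior_subset)
    (fun u hu ↦ (hd2 u (interior_subset hu)).mono interior_subset)
    (fun u hu ↦ hf'' u (interior_subset hu))

end Real

theorem exists_mem_uIcc_eq_zero_of_mul_nonpos {α K : Type*}
    [ConditionallyCompleteLinearOrder α] [TopologicalSpace α] [OrderTopology α] [DenselyOrdered α]
    [Field K] [LinearOrder K] [IsStrictOrderedRing K] [TopologicalSpace K] [OrderClosedTopology K]
    {f : α → K} {a b : α} (hf : ContinuousOn f (uIcc a b)) (hab : f a * f b ≤ 0) :
    ∃ r ∈ uIcc a b, f r = 0 :=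
  intermediate_value_uIcc hf (mem_uIcc.2 ((mul_nonpos_iff.1 hab).symm.imp_right And.symm))

theorem stmt16_general {s : Set ℝ} {f f' : ℝ → ℝ} {x : ℕ → ℝ}
    (hd : ∀ u ∈ s, HasDerivWithinAt f (f' u) s u) (hne : ∀ u ∈ s, f' u ≠ 0)
    (hzero : ∃ r ∈ s, f r = 0) (hx0 : x 0 ∈ s)
    (hcase : (ConvexOn ℝ s f ∧ 0 ≤ f (x 0)) ∨ (ConcaveOn ℝ s f ∧ f (x 0) ≤ 0))
    (hrec : ∀ k, x (k + 1) = x k - f (x k) / f' (x k)) :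
    (∀ k, x k ∈ s) ∧ (Monotone x ∨ Antitone x) ∧
    ∃ r ∈ s, f r = 0 ∧ (∀ y ∈ s, f y = 0 → y = r) ∧ Tendsto x atTop (𝓝 r) := by
  have key (y : ℝ) (hy : y ∈ s) (hfy : f y = 0) :
      (∀ k, x k ∈ s) ∧ (Monotone x ∨ Antitone x) ∧ Tendsto x atTop (𝓝 y) := by
    rcases hcase with ⟨hf, hfx0⟩ | ⟨hf, hfx0⟩
    · exact newtonSeq_mem_monotone_or_antitone_tendsto_of_convexOn hf hd hne hy hfy hx0 hfx0 hrec
    · exact newtonSeq_mem_monotone_or_antitone_tendsto_of_concaveOn hf hd hne hy hfy hx0 hfx0 hrec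
  obtain ⟨r, hr, hfr⟩ := hzero
  obtain ⟨hmem, hmono, hlim⟩ := key r hr hfr
  exact ⟨hmem, hmono, r, hr, hfr,
    fun y hy hfy ↦ tendsto_nhds_unique (key y hy hfy).2.2 hlim, hlim⟩

/-- global monotone convergence of Newton's method on [a,b] for a C² function
with f(a)·f(b) < 0, nonvanishing f', and convex (resp. concave) f with f(x0) ≥ 0
(resp. f(x0) ≤ 0). -/
theorem stmt16 (a b : ℝ) (hab : a < b) (f f' f'' : ℝ → ℝ)
    (hd1 : ∀ x ∈ Set.Icc a b, HasDerivWithinAt f (f' x) (Set.Icc a b) x)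
    (hd2 : ∀ x ∈ Set.Icc a b, HasDerivWithinAt f' (f'' x) (Set.Icc a b) x)
    (hcont : ContinuousOn f'' (Set.Icc a b))
    (hsign : f a * f b < 0)
    (hne : ∀ x ∈ Set.Icc a b, f' x ≠ 0)
    (x0 : ℝ) (hx0 : x0 ∈ Set.Icc a b)
    (hcase : ((∀ x ∈ Set.Icc a b, 0 ≤ f'' x) ∧ 0 ≤ f x0) ∨
             ((∀ x ∈ Set.Icc a b, f'' x ≤ 0) ∧ f x0 ≤ 0))
    (x : ℕ → ℝ) (hx : x 0 = x0)
    (hrec : ∀ k, x (k + 1) = x k - f (x k) / f' (x k)) :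
    (∀ k, x k ∈ Set.Icc a b) ∧ (Monotone x ∨ Antitone x) ∧
    ∃ r ∈ Set.Icc a b, f r = 0 ∧ (∀ y ∈ Set.Icc a b, f y = 0 → y = r) ∧
      Filter.Tendsto x Filter.atTop (nhds r) := by
  subst hx
  have hzero : ∃ r ∈ Set.Icc a b, f r = 0 := uIcc_of_le hab.le ▸
    exists_mem_uIcc_eq_zero_of_mul_nonpos
      (uIcc_of_le hab.le ▸ HasDerivWithinAt.continuousOn hd1) hsign.le
  exact stmt16_general hd1 hne hzero hx0 (hcase.imp
    (.imp_left (convexOn_of_forall_mem_hasDerivWithinAt2_nonneg (convex_Icc a b) hd1 hd2))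
    (.imp_left (concaveOn_of_forall_mem_hasDerivWithinAt2_nonpos (convex_Icc a b) hd1 hd2))) hrec
end

section
/- Let c0 ≥ 0, c1 > 0, a > 0, and 0 ≤ v0 < v∞ := β/c1, where w := √(c0² + 4·a·c1) > 0. Let v(t) := v0 + (a0 − a)·E(t,w)/(1 − γ·E(t,w)). Then 1 − γ·E(t,w) > 0 for all t ≥ 0, v is strictly increasing on [0, ∞), and lim_{t → ∞} v(t) = v∞ = β/c1. -/
/-!
Since `v∞` and `-α / c1` are the zeros of the quadratic `c1 x² + c0 x - a`, its value at `v0` is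
`a0 - a = -(v∞ - v0) γ`. As `t` grows from `0`, `E(t, w)` decreases from `0` to `-∞`, and as `x`
decreases from `0` to `-∞`, the Möbius function `x / (1 - γ x)` decreases from `0` to `-1 / γ`.
Hence `v` increases from `v0` to `v0 - (a0 - a) / γ = v∞`.
-/

open Set Filter Topology

section Field

variable {K : Type*} [Field K] [LinearOrder K] [IsStrictOrderedRing K]

theorem strictMonoOn_div_one_sub_mul (γ : K) :
    StrictMonoOn (fun x ↦ x / (1 - γ * x)) {x | 0 < 1 - γ * x} := by
  intro x hx y hy hxy
  refine (div_lt_div_iff₀ hx hy).mpr ?_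
  linarith

theorem tendsto_div_one_sub_mul_atBot [TopologicalSpace K] [OrderTopology K] {γ : K}
    (hγ : γ ≠ 0) : Tendsto (fun x ↦ x / (1 - γ * x)) atBot (𝓝 (-γ⁻¹)) := by
  have h_lim : Tendsto (fun x : K ↦ (x⁻¹ - γ)⁻¹) atBot (𝓝 (-γ⁻¹)) := by
    simpa only [zero_sub, inv_neg] using
      (tendsto_inv_atBot_zero.sub_const γ).inv₀ (by simpa only [zero_sub, neg_ne_zero] using hγ)
  refine h_lim.congr' ?_
  filter_upwards [eventually_lt_atBot 0] with x hx
  rw [← inv_div, sub_div, one_div, mul_div_cancel_right₀ γ hx.ne]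

end Field

theorem quadratic_sub_eq_neg_mul_of_sq_eq {K : Type*} [Field K] [NeZero (2 : K)]
    {a c0 c1 w : K} (hc1 : c1 ≠ 0) (hw : w ^ 2 = c0 ^ 2 + 4 * a * c1) (x : K) :
    (c1 * x + c0) * x - a = -(((w - c0) / 2 / c1 - x) * (c1 * x + (w + c0) / 2)) := by
  field_simp
  linear_combination hw

theorem strictAnti_one_sub_exp_div {w : ℝ} (hw : w ≠ 0) :
    StrictAnti fun t ↦ (1 - Real.exp (w * t)) / w := by
  intro s t hst
  rcases hw.lt_or_gt with hneg | hpos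
  · refine div_lt_div_of_neg_of_lt hneg (sub_lt_sub_left (Real.exp_lt_exp.mpr ?_) 1)
    exact mul_lt_mul_of_neg_left hst hneg
  · refine div_lt_div_of_pos_right (sub_lt_sub_left (Real.exp_lt_exp.mpr ?_) 1) hpos
    exact mul_lt_mul_of_pos_left hst hpos

theorem one_sub_exp_div_nonpos {w t : ℝ} (hw : w ≠ 0) (ht : 0 ≤ t) :
    (1 - Real.exp (w * t)) / w ≤ 0 := by
  simpa using (strictAnti_one_sub_exp_div hw).antitone ht

theorem tendsto_one_sub_exp_div_atTop {w : ℝ} (hw : 0 < w) :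
    Tendsto (fun t ↦ (1 - Real.exp (w * t)) / w) atTop atBot := by
  have h_exp : Tendsto (fun t ↦ Real.exp (w * t)) atTop atTop :=
    Real.tendsto_exp_atTop.comp (tendsto_id.const_mul_atTop hw)
  exact (tendsto_atBot_add_const_left _ 1 (tendsto_neg_atTop_atBot.comp h_exp)).atBot_div_const hw

/- When `0 < c1`, the condition `0 < γ` says that `v0` lies above the unstable equilibrium
`-α / c1` of the equation of motion `v' = a - c0 v - c1 v²`. -/
theorem stmt18_general (c0 c1 a v0 : ℝ) (hc1 : c1 ≠ 0)
    (w α β γ a0 vinf : ℝ) (hw : w = Real.sqrt (c0 ^ 2 + 4 * a * c1)) (hwpos : 0 < w)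
    (hα : α = (w + c0) / 2) (hβ : β = (w - c0) / 2) (hγ : γ = c1 * v0 + α) (hγpos : 0 < γ)
    (ha0 : a0 = (c1 * v0 + c0) * v0) (hvinf : vinf = β / c1) (hlt : v0 < vinf)
    (E : ℝ → ℝ → ℝ) (hE : ∀ t u, E t u = (1 - Real.exp (u * t)) / u)
    (v : ℝ → ℝ) (hv : ∀ t, v t = v0 + (a0 - a) * E t w / (1 - γ * E t w)) :
    (∀ t : ℝ, 0 ≤ t → 0 < 1 - γ * E t w) ∧
    StrictMonoOn v (Set.Ici (0 : ℝ)) ∧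
    Filter.Tendsto v Filter.atTop (nhds vinf) := by
  have hw_sq : w ^ 2 = c0 ^ 2 + 4 * a * c1 := by
    rw [hw, Real.sq_sqrt (Real.sqrt_pos.mp (hw ▸ hwpos)).le]
  have h_accel : a0 - a = -((vinf - v0) * γ) := by
    rw [ha0, hvinf, hβ, hγ, hα, quadratic_sub_eq_neg_mul_of_sq_eq hc1 hw_sq]
  have h_accel_neg : a0 - a < 0 := h_accel ▸ neg_neg_of_pos (mul_pos (sub_pos.mpr hlt) hγpos)
  have h_denom : ∀ t : ℝ, 0 ≤ t → 0 < 1 - γ * E t w := fun t ht ↦ by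
    have hE_nonpos : E t w ≤ 0 := hE t w ▸ one_sub_exp_div_nonpos hwpos.ne' ht
    linarith [mul_nonpos_of_nonneg_of_nonpos hγpos.le hE_nonpos]
  have hE_anti : StrictAnti (E · w) := by
    simpa only [hE] using strictAnti_one_sub_exp_div hwpos.ne'
  have hE_lim : Tendsto (E · w) atTop atBot := by
    simpa only [hE] using tendsto_one_sub_exp_div_atTop hwpos
  have hv_eq : v = fun t ↦ v0 + (a0 - a) * (E t w / (1 - γ * E t w)) := by
    simp only [funext hv, mul_div_assoc]
  have h_limit : v0 + (a0 - a) * -γ⁻¹ = vinf := by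
    rw [h_accel, neg_mul_neg, mul_inv_cancel_right₀ hγpos.ne', add_sub_cancel]
  rw [hv_eq]
  refine ⟨h_denom, fun s hs t ht hst ↦ ?_, ?_⟩
  · exact add_lt_add_right (mul_lt_mul_of_neg_left
      (strictMonoOn_div_one_sub_mul γ (h_denom t ht) (h_denom s hs) (hE_anti hst)) h_accel_neg) v0
  · rw [← h_limit]
    exact (((tendsto_div_one_sub_mul_atBot hγpos.ne').comp hE_lim).const_mul _).const_add v0

/-- for positive acceleration and v0 < v∞ the speed v(t) is defined for all
t ≥ 0 (positive denominator), strictly increasing on [0,∞), and tends to v∞ = β/c1. -/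
theorem stmt18 (c0 c1 a v0 : ℝ) (hc0 : 0 ≤ c0) (hc1 : 0 < c1) (ha : 0 < a) (hv0 : 0 ≤ v0)
    (w α β γ a0 vinf : ℝ) (hw : w = Real.sqrt (c0 ^ 2 + 4 * a * c1)) (hwpos : 0 < w)
    (hα : α = (w + c0) / 2) (hβ : β = (w - c0) / 2) (hγ : γ = c1 * v0 + α)
    (ha0 : a0 = (c1 * v0 + c0) * v0) (hvinf : vinf = β / c1) (hlt : v0 < vinf)
    (E : ℝ → ℝ → ℝ) (hE : ∀ t u, E t u = (1 - Real.exp (u * t)) / u)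
    (v : ℝ → ℝ) (hv : ∀ t, v t = v0 + (a0 - a) * E t w / (1 - γ * E t w)) :
    (∀ t : ℝ, 0 ≤ t → 0 < 1 - γ * E t w) ∧
    StrictMonoOn v (Set.Ici (0 : ℝ)) ∧
    Filter.Tendsto v Filter.atTop (nhds vinf) := by
  have hγpos : 0 < γ := by rw [hγ, hα]; positivity
  exact stmt18_general c0 c1 a v0 hc1.ne' w α β γ a0 vinf hw hwpos hα hβ hγ hγpos ha0 hvinf hlt
    E hE v hv
end
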